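/- arXiv:1311.3464 — 4 statements merged into one kernel-verified Lean document; each statement's English description precedes it below -/
import Mathlib

section
/- Let κ ≥ 1 and let φ : ℝⁿ → ℝ be a function such that e^{-φ} is an unconditional probability density and (x_1,...,x_n) ↦ φ(x_1^κ,...,x_n^κ) is convex on the positive orthant ℝⁿ₊. Let X be a random vector with density e^{-φ(x)}. Then for any p ≥ 1 and each i = 1,...,n, one has E|X_i|^p ≤ c_{p,κ} (E|X_i|²)^{p/2}, where c_{p,κ} depends only on p and κ. -/
open MeasureTheory ProbabilityTheory Real

/-!
The coordinatewise substitution `uᵢ = |xᵢ| ^ (1 / κ)` turns the density `e^{-φ}` into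
`∏ᵢ 2κ uᵢ ^ (κ - 1) * e^{-φ(u ^ κ)}` on the positive orthant, which is log-concave because
`κ ≥ 1`. By the Prékopa–Leindler inequality each marginal `ν`, the law of `U = |Xᵢ| ^ (1 / κ)`,
is log-concave, and therefore `ν [s t, ∞) ≤ ν [t, ∞) ^ s` for `s ≥ 1`. Once `ν [t, ∞) ≤ 1 / e`
the tail of `ν` is dominated by `e * exp (-u / t)`, so that `E U ^ r ≤ e Γ(r + 1) t ^ r`; Markov's
inequality allows the choice `t = (e E U ^ s) ^ (1 / s)`. Take `r = κ p` and `s = 2 κ`.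
-/

open Set Function Filter Topology
open scoped ENNReal NNReal Pointwise

section PrekopaLeindler

theorem volume_add_volume_le_of_isCompact {A B : Set ℝ} (hA : IsCompact A) (hB : IsCompact B)
    (hA₀ : A.Nonempty) (hB₀ : B.Nonempty) : volume A + volume B ≤ volume (A + B) := by
  -- The translates `b + A` and `a + B` both lie in `A + B` and meet only at `a + b`.
  obtain ⟨a, haA, ha⟩ := hA.exists_isGreatest hA₀
  obtain ⟨b, hbB, hb⟩ := hB.exists_isLeast hB₀
  have overlap : (b +ᵥ A) ∩ (a +ᵥ B) ⊆ {a + b} := by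
    rintro _ ⟨⟨x, hx, rfl⟩, ⟨y, hy, hxy⟩⟩
    have hxa := ha hx
    have hby := hb hy
    simp only [vadd_eq_add, mem_singleton_iff] at hxy ⊢
    linarith
  have disjoint : AEDisjoint volume (b +ᵥ A) (a +ᵥ B) :=
    measure_mono_null overlap (measure_singleton _)
  calc volume A + volume B = volume (b +ᵥ A) + volume (a +ᵥ B) := by simp only [measure_vadd]
    _ = volume ((b +ᵥ A) ∪ (a +ᵥ B)) :=
      (measure_union₀ (hB.measurableSet.const_vadd a).nullMeasurableSet disjoint).symm
    _ ≤ volume (A + B) := by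
      refine measure_mono (union_subset ?_ ?_)
      · rintro _ ⟨x, hx, rfl⟩
        exact ⟨x, hx, b, hbB, add_comm x b⟩
      · rintro _ ⟨y, hy, rfl⟩
        exact ⟨a, haA, y, hy, rfl⟩

theorem volume_add_volume_le_volume_add {A B : Set ℝ} (hA : MeasurableSet A)
    (hB : MeasurableSet B) (hA₀ : A.Nonempty) (hB₀ : B.Nonempty) :
    volume A + volume B ≤ volume (A + B) := by
  obtain ⟨a, ha⟩ := hA₀
  obtain ⟨b, hb⟩ := hB₀
  rw [hA.measure_eq_iSup_isCompact, hB.measure_eq_iSup_isCompact]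
  simp only [iSup_and']
  refine ENNReal.biSup_add_biSup_le' ⟨∅, empty_subset _, isCompact_empty⟩
    ⟨∅, empty_subset _, isCompact_empty⟩ ?_
  rintro K ⟨hKA, hK⟩ L ⟨hLB, hL⟩
  calc volume K + volume L ≤ volume (insert a K) + volume (insert b L) := by
        gcongr <;> exact subset_insert _ _
    _ ≤ volume (insert a K + insert b L) :=
      volume_add_volume_le_of_isCompact (hK.insert a) (hL.insert b) (insert_nonempty a K)
        (insert_nonempty b L)
    _ ≤ volume (A + B) :=
      measure_mono (add_subset_add (insert_subset ha hKA) (insert_subset hb hLB))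

variable {a b : ℝ} (ha : 0 < a) (hb : 0 < b) (hab : a + b = 1)
include ha hb hab

theorem rpow_mul_rpow_le_ofReal_mul_add (x y : ℝ≥0∞) :
    x ^ a * y ^ b ≤ ENNReal.ofReal a * x + ENNReal.ofReal b * y := by
  have h := ENNReal.young_inequality (x ^ a) (y ^ b) (Real.holderConjugate_one_div ha hb hab)
  simpa [← ENNReal.rpow_mul, ha.ne', hb.ne', ENNReal.ofReal_inv_of_pos, ha, hb, div_eq_mul_inv,
    mul_comm] using h

theorem lintegral_add_lintegral_le_of_isLUB {f g h : ℝ → ℝ≥0} {M : ℝ≥0}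
    (hf : Measurable f) (hg : Measurable g) (hh : Measurable h)
    (hfM : IsLUB (range f) M) (hgM : IsLUB (range g) M)
    (hfgh : ∀ x y, f x ^ a * g y ^ b ≤ h (a * x + b * y)) :
    ENNReal.ofReal a * (∫⁻ x, f x) + ENNReal.ofReal b * (∫⁻ x, g x) ≤ ∫⁻ x, h x := by
  have layercake {u : ℝ → ℝ≥0} (hu : Measurable u) :
      ∫⁻ x, u x = ∫⁻ t in Ioi (0 : ℝ), volume {x | t < u x} := by
    rw [← lintegral_eq_lintegral_meas_lt volume (.of_forall fun x ↦ (u x).coe_nonneg) (by fun_prop)]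
    simp only [ENNReal.ofReal_coe_nnreal]
  have measurable_tail (u : ℝ → ℝ≥0) : Measurable fun t : ℝ ↦ volume {x | t < u x} :=
    Antitone.measurable fun s t hst ↦ measure_mono fun x hx ↦ hst.trans_lt hx
  have measurableSet_level {u : ℝ → ℝ≥0} (hu : Measurable u) (t : ℝ) :
      MeasurableSet {x | t < u x} := measurableSet_lt measurable_const (by fun_prop)
  have volume_dilate (c : ℝ) (hc : 0 < c) (A : Set ℝ) :
      ENNReal.ofReal c * volume A = volume (c • A) := by
    simp [Measure.addHaar_smul, abs_of_pos hc]
  rw [layercake hf, layercake hg, layercake hh, ← lintegral_const_mul _ (measurable_tail f),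
    ← lintegral_const_mul _ (measurable_tail g),
    ← lintegral_add_left ((measurable_tail f).const_mul _)]
  refine setLIntegral_mono' measurableSet_Ioi fun t ht ↦ ?_
  lift t to ℝ≥0 using (mem_Ioi.1 ht).le
  simp only [NNReal.coe_lt_coe]
  -- As `f` and `g` have the same supremum, both superlevel sets are nonempty or both are empty.
  rcases lt_or_ge t M with htM | htM
  · obtain ⟨_, ⟨x, rfl⟩, hx⟩ := (lt_isLUB_iff hfM).1 htM
    obtain ⟨_, ⟨y, rfl⟩, hy⟩ := (lt_isLUB_iff hgM).1 htM
    rw [volume_dilate a ha, volume_dilate b hb]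
    refine (volume_add_volume_le_volume_add ((measurableSet_level hf t).const_smul₀ a)
      ((measurableSet_level hg t).const_smul₀ b) (Nonempty.smul_set ⟨x, hx⟩)
      (Nonempty.smul_set ⟨y, hy⟩)).trans (measure_mono ?_)
    rintro _ ⟨_, ⟨x, hx, rfl⟩, _, ⟨y, hy, rfl⟩, rfl⟩
    calc t = t ^ a * t ^ b := by
          rw [← NNReal.rpow_add_of_nonneg _ ha.le hb.le, hab, NNReal.rpow_one]
      _ < f x ^ a * g y ^ b := by gcongr <;> assumption
      _ ≤ h (a * x + b * y) := hfgh x y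
  · have empty {u : ℝ → ℝ≥0} (hu : IsLUB (range u) M) : {x | t < u x} = ∅ :=
      eq_empty_of_forall_notMem fun x hx ↦ (hx.trans_le (hu.1 (mem_range_self x))).not_ge htM
    simp [empty hfM, empty hgM]

theorem prekopa_leindler_of_bddAbove {f g h : ℝ → ℝ≥0}
    (hf : Measurable f) (hg : Measurable g) (hh : Measurable h)
    (hf' : BddAbove (range f)) (hg' : BddAbove (range g))
    (hfgh : ∀ x y, f x ^ a * g y ^ b ≤ h (a * x + b * y)) :
    (∫⁻ x, f x) ^ a * (∫⁻ x, g x) ^ b ≤ ∫⁻ x, h x := by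
  have isLUB_normalize {u : ℝ → ℝ≥0} (hu : BddAbove (range u)) (hu₀ : ⨆ x, u x ≠ 0) :
      IsLUB (range fun x ↦ (⨆ x, u x)⁻¹ * u x) 1 := by
    have := (OrderIso.mulLeft₀ _ (inv_pos.2 (pos_iff_ne_zero.2 hu₀))).isLUB_image'.2
      (isLUB_ciSup hu)
    rw [← range_comp] at this
    simpa only [comp_def, OrderIso.mulLeft₀_apply, inv_mul_cancel₀ hu₀] using this
  have eq_zero_of_iSup_eq_zero {u : ℝ → ℝ≥0} (hu : BddAbove (range u)) (hu₀ : ⨆ x, u x = 0)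
      (x : ℝ) : u x = 0 := le_antisymm ((le_ciSup hu x).trans_eq hu₀) zero_le
  rcases eq_or_ne (⨆ x, f x) 0 with hF | hF
  · simp [eq_zero_of_iSup_eq_zero hf' hF, ha]
  rcases eq_or_ne (⨆ x, g x) 0 with hG | hG
  · simp [eq_zero_of_iSup_eq_zero hg' hG, hb]
  have isLUB_f := isLUB_normalize hf' hF
  have isLUB_g := isLUB_normalize hg' hG
  set F : ℝ≥0 := ⨆ x, f x
  set G : ℝ≥0 := ⨆ x, g x
  have normalized := (rpow_mul_rpow_le_ofReal_mul_add ha hb hab _ _).trans <|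
    lintegral_add_lintegral_le_of_isLUB ha hb hab (hf.const_mul F⁻¹) (hg.const_mul G⁻¹)
      (hh.const_mul (F⁻¹ ^ a * G⁻¹ ^ b)) isLUB_f isLUB_g fun x y ↦ by
        rw [NNReal.mul_rpow, NNReal.mul_rpow, mul_mul_mul_comm]
        gcongr
        exact hfgh x y
  have const_ne_zero : F⁻¹ ^ a * G⁻¹ ^ b ≠ 0 := by positivity
  simp only [ENNReal.coe_mul] at normalized
  rw [lintegral_const_mul _ hf.coe_nnreal_ennreal, lintegral_const_mul _ hg.coe_nnreal_ennreal,
    ← ENNReal.coe_mul, lintegral_const_mul _ hh.coe_nnreal_ennreal,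
    ENNReal.mul_rpow_of_nonneg _ _ ha.le, ENNReal.mul_rpow_of_nonneg _ _ hb.le, mul_mul_mul_comm,
    ← ENNReal.coe_rpow_of_nonneg _ ha.le, ← ENNReal.coe_rpow_of_nonneg _ hb.le,
    ← ENNReal.coe_mul] at normalized
  exact (ENNReal.mul_le_mul_iff_right (ENNReal.coe_ne_zero.2 const_ne_zero)
    ENNReal.coe_ne_top).1 normalized

theorem prekopa_leindler {f g h : ℝ → ℝ≥0∞}
    (hf : Measurable f) (hg : Measurable g) (hh : Measurable h)
    (hfgh : ∀ x y, f x ^ a * g y ^ b ≤ h (a * x + b * y)) :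
    (∫⁻ x, f x) ^ a * (∫⁻ x, g x) ^ b ≤ ∫⁻ x, h x := by
  have coe_truncate (u : ℝ → ℝ≥0∞) (M : ℝ≥0) (x : ℝ) :
      ((min (u x) M).toNNReal : ℝ≥0∞) = min (u x) M :=
    ENNReal.coe_toNNReal (ne_top_of_le_ne_top ENNReal.coe_ne_top (min_le_right _ _))
  have bddAbove_truncate (u : ℝ → ℝ≥0∞) (M : ℝ≥0) :
      BddAbove (range fun x ↦ (min (u x) M).toNNReal) :=
    ⟨M, forall_mem_range.2 fun x ↦
      ENNReal.coe_le_coe.1 ((coe_truncate u M x).trans_le (min_le_right _ _))⟩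
  have measurable_truncate {u : ℝ → ℝ≥0∞} (hu : Measurable u) (M : ℝ≥0) :
      Measurable fun x ↦ (min (u x) M).toNNReal := (hu.min measurable_const).ennreal_toNNReal
  have truncated (M N : ℕ) :
      (∫⁻ x, min (f x) M) ^ a * (∫⁻ x, min (g x) N) ^ b ≤ ∫⁻ x, h x := by
    have := prekopa_leindler_of_bddAbove ha hb hab (measurable_truncate hf M)
      (measurable_truncate hg N) (measurable_truncate hh (M ^ a * N ^ b))
      (bddAbove_truncate f M) (bddAbove_truncate g N) fun x y ↦ by
        rw [← ENNReal.coe_le_coe, coe_truncate]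
        simp only [ENNReal.coe_mul, ENNReal.coe_rpow_of_nonneg _ ha.le,
          ENNReal.coe_rpow_of_nonneg _ hb.le, coe_truncate]
        refine le_min (le_trans ?_ (hfgh x y)) ?_ <;> gcongr <;> simp
    simp only [coe_truncate] at this
    exact this.trans (lintegral_mono fun x ↦ min_le_left _ _)
  have lintegral_eq_iSup {u : ℝ → ℝ≥0∞} (hu : Measurable u) :
      ∫⁻ x, u x = ⨆ M : ℕ, ∫⁻ x, min (u x) M := by
    rw [← lintegral_iSup (fun M ↦ hu.min measurable_const)
      fun M N hMN x ↦ min_le_min_left _ (Nat.cast_le.2 hMN)]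
    simp only [← inf_iSup_eq, ENNReal.iSup_natCast, inf_top_eq]
  have rpow_iSup {c : ℝ} (hc : 0 < c) (u : ℕ → ℝ≥0∞) : (⨆ M, u M) ^ c = ⨆ M, u M ^ c :=
    (ENNReal.orderIsoRpow c hc).map_iSup u
  rw [lintegral_eq_iSup hf, lintegral_eq_iSup hg, rpow_iSup ha, rpow_iSup hb]
  simp only [ENNReal.iSup_mul, ENNReal.mul_iSup]
  exact iSup₂_le fun N M ↦ truncated M N

end PrekopaLeindler

/-- Log-concavity of a measure, encoded as the Prékopa–Leindler inequality for functions instead of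
the usual inequality for sets: the functional form passes to products by Fubini. -/
def IsLogConcaveMeasure {E : Type*} [AddCommMonoid E] [Module ℝ E] [MeasurableSpace E]
    (μ : Measure E) : Prop :=
  ∀ ⦃a b : ℝ⦄, 0 < a → 0 < b → a + b = 1 → ∀ ⦃f g h : E → ℝ≥0∞⦄,
    Measurable f → Measurable g → Measurable h →
    (∀ x y, f x ^ a * g y ^ b ≤ h (a • x + b • y)) →
      (∫⁻ x, f x ∂μ) ^ a * (∫⁻ x, g x ∂μ) ^ b ≤ ∫⁻ x, h x ∂μ

theorem isLogConcaveMeasure_volume_real : IsLogConcaveMeasure (volume : Measure ℝ) :=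
  fun _ _ ha hb hab _ _ _ hf hg hh hfgh ↦ prekopa_leindler ha hb hab hf hg hh hfgh

theorem measurable_indicator_exp_neg {E : Type*} [NormedAddCommGroup E] [NormedSpace ℝ E]
    [FiniteDimensional ℝ E] [MeasurableSpace E] [BorelSpace E] {S : Set E} (hS : IsOpen S)
    {ψ : E → ℝ} (hψ : ConvexOn ℝ S ψ) :
    Measurable (S.indicator fun x ↦ ENNReal.ofReal (exp (-ψ x))) := by
  classical
  have continuous : ContinuousOn (fun x ↦ ENNReal.ofReal (exp (-ψ x))) S :=
    ENNReal.continuous_ofReal.comp_continuousOn (hψ.continuousOn hS).neg.rexp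
  rw [← piecewise_eq_indicator]
  exact continuous.measurable_piecewise continuousOn_const hS.measurableSet

namespace IsLogConcaveMeasure

section Operations

variable {E F : Type*} [AddCommMonoid E] [Module ℝ E] [MeasurableSpace E]
  [AddCommMonoid F] [Module ℝ F] [MeasurableSpace F] {μ : Measure E} {ν : Measure F}

theorem map (hμ : IsLogConcaveMeasure μ) {T : E → F} (hT : IsLinearMap ℝ T)
    (hT' : Measurable T) : IsLogConcaveMeasure (μ.map T) := by
  intro a b ha hb hab f g h hf hg hh hfgh
  rw [lintegral_map hf hT', lintegral_map hg hT', lintegral_map hh hT']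
  refine hμ ha hb hab (hf.comp hT') (hg.comp hT') (hh.comp hT') fun x y ↦ ?_
  simpa only [hT.map_add, hT.map_smul] using hfgh (T x) (T y)

theorem prod [SFinite ν] (hμ : IsLogConcaveMeasure μ) (hν : IsLogConcaveMeasure ν) :
    IsLogConcaveMeasure (μ.prod ν) := by
  intro a b ha hb hab f g h hf hg hh hfgh
  simp only [lintegral_prod _ hf.aemeasurable, lintegral_prod _ hg.aemeasurable,
    lintegral_prod _ hh.aemeasurable]
  refine hμ ha hb hab hf.lintegral_prod_right' hg.lintegral_prod_right' hh.lintegral_prod_right'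
    fun x x' ↦ hν ha hb hab (hf.comp measurable_prodMk_left) (hg.comp measurable_prodMk_left)
      (hh.comp measurable_prodMk_left) fun y y' ↦ hfgh (x, y) (x', y')

theorem dirac (x : E) : IsLogConcaveMeasure (Measure.dirac x) := by
  intro a b _ _ hab f g h hf hg hh hfgh
  simpa only [lintegral_dirac' _ hf, lintegral_dirac' _ hg, lintegral_dirac' _ hh, ← add_smul,
    hab, one_smul] using hfgh x x

theorem measure_rpow_mul_measure_rpow_le (hμ : IsLogConcaveMeasure μ) {a b : ℝ} (ha : 0 < a)
    (hb : 0 < b) (hab : a + b = 1) {A B C : Set E} (hA : MeasurableSet A) (hB : MeasurableSet B)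
    (hC : MeasurableSet C) (hABC : ∀ x ∈ A, ∀ y ∈ B, a • x + b • y ∈ C) :
    μ A ^ a * μ B ^ b ≤ μ C := by
  simp only [← lintegral_indicator_one, hA, hB, hC]
  refine hμ ha hb hab (measurable_one.indicator hA) (measurable_one.indicator hB)
    (measurable_one.indicator hC) fun x y ↦ ?_
  by_cases hx : x ∈ A
  · by_cases hy : y ∈ B
    · simp [hx, hy, hABC x hx y hy]
    · simp [hy, hb]
  · simp [hx, ha]

end Operations

theorem pi {ι : Type*} [Fintype ι] {E : ι → Type*} [∀ i, AddCommMonoid (E i)]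
    [∀ i, Module ℝ (E i)] [∀ i, MeasurableSpace (E i)] {μ : ∀ i, Measure (E i)}
    [∀ i, SigmaFinite (μ i)] (hμ : ∀ i, IsLogConcaveMeasure (μ i)) :
    IsLogConcaveMeasure (Measure.pi μ) := by
  revert E
  refine Fintype.induction_empty_option (P := fun ι _ ↦ ∀ {E : ι → Type _}
    [∀ i, AddCommMonoid (E i)] [∀ i, Module ℝ (E i)] [∀ i, MeasurableSpace (E i)]
    {μ : ∀ i, Measure (E i)} [∀ i, SigmaFinite (μ i)], (∀ i, IsLogConcaveMeasure (μ i)) →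
      IsLogConcaveMeasure (Measure.pi μ)) ?of_equiv ?empty ?option ι
  case of_equiv =>
    intro α β _ e ih E _ _ _ μ _ hμ
    let _ := Fintype.ofEquiv β e.symm
    rw [← Measure.pi_map_piCongrLeft e]
    refine (ih fun i ↦ hμ (e i)).map ⟨fun x y ↦ ?_, fun c x ↦ ?_⟩ (MeasurableEquiv.measurable _) <;>
    · funext j
      obtain ⟨i, rfl⟩ := e.surjective j
      simp [MeasurableEquiv.piCongrLeft]
  case empty =>
    intro E _ _ _ μ _ _
    rw [Measure.pi_of_empty μ 0]
    exact dirac 0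
  case option =>
    intro α _ ih E _ _ _ μ _ hμ
    rw [← Measure.pi_map_piOptionEquivProd]
    refine ((ih fun i ↦ hμ (some i)).prod (hμ none)).map ⟨fun x y ↦ ?_, fun c x ↦ ?_⟩
      (MeasurableEquiv.measurable _) <;>
    · funext i
      cases i <;> rfl

theorem withDensity {E : Type*} [AddCommMonoid E] [Module ℝ E] [MeasurableSpace E] {μ : Measure E}
    (hμ : IsLogConcaveMeasure μ) {w : E → ℝ≥0∞} (hw : Measurable w)
    (hw' : ∀ ⦃a b : ℝ⦄, 0 < a → 0 < b → a + b = 1 →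
      ∀ x y, w x ^ a * w y ^ b ≤ w (a • x + b • y)) :
    IsLogConcaveMeasure (μ.withDensity w) := by
  intro a b ha hb hab f g h hf hg hh hfgh
  simp only [lintegral_withDensity_eq_lintegral_mul μ hw, hf, hg, hh]
  refine hμ ha hb hab (hw.mul hf) (hw.mul hg) (hw.mul hh) fun x y ↦ ?_
  simp only [Pi.mul_apply]
  rw [ENNReal.mul_rpow_of_nonneg _ _ ha.le, ENNReal.mul_rpow_of_nonneg _ _ hb.le, mul_mul_mul_comm]
  exact mul_le_mul' (hw' ha hb hab x y) (hfgh x y)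

theorem withDensity_indicator_exp_neg {E : Type*} [NormedAddCommGroup E] [NormedSpace ℝ E]
    [FiniteDimensional ℝ E] [MeasurableSpace E] [BorelSpace E] {μ : Measure E}
    (hμ : IsLogConcaveMeasure μ) {S : Set E} (hS : IsOpen S) {ψ : E → ℝ} (hψ : ConvexOn ℝ S ψ) :
    IsLogConcaveMeasure
      (μ.withDensity (S.indicator fun x ↦ ENNReal.ofReal (exp (-ψ x)))) := by
  refine hμ.withDensity (measurable_indicator_exp_neg hS hψ) fun a b ha hb hab x y ↦ ?_
  by_cases hx : x ∈ S
  · by_cases hy : y ∈ S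
    · have hxy := hψ.1 hx hy ha.le hb.le hab
      rw [indicator_of_mem hx, indicator_of_mem hy, indicator_of_mem hxy,
        ENNReal.ofReal_rpow_of_pos (exp_pos _), ENNReal.ofReal_rpow_of_pos (exp_pos _),
        ← ENNReal.ofReal_mul (by positivity), ← exp_mul, ← exp_mul, ← exp_add]
      refine ENNReal.ofReal_le_ofReal (exp_le_exp.2 ?_)
      have := hψ.2 hx hy ha.le hb.le hab
      simp only [smul_eq_mul] at this
      linarith
    · simp [hy, hb]
  · simp [hx, ha]

end IsLogConcaveMeasure

section AbsRpow

theorem lintegral_comp_abs (F : ℝ → ℝ≥0∞) : ∫⁻ x, F |x| = 2 * ∫⁻ x in Ioi 0, F x := by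
  have right : ∫⁻ x in Ioi 0, F |x| = ∫⁻ x in Ioi 0, F x :=
    setLIntegral_congr_fun measurableSet_Ioi fun x hx ↦ by simp only [abs_of_pos (mem_Ioi.1 hx)]
  have left : ∫⁻ x in Iic 0, F |x| = ∫⁻ x in Ioi 0, F x := by
    rw [← right, setLIntegral_congr Iio_ae_eq_Iic.symm]
    have := lintegral_image_eq_lintegral_abs_deriv_mul (measurableSet_Ioi (a := (0 : ℝ)))
      (fun x _ ↦ (hasDerivAt_neg x).hasDerivWithinAt) neg_injective.injOn fun x ↦ F |x|
    simpa using this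
  rw [← lintegral_add_compl _ (measurableSet_Iic (a := (0 : ℝ))), compl_Iic, left, right, two_mul]

variable {κ : ℝ}

theorem lintegral_Ioi_comp_rpow_inv (hκ : 0 < κ) (F : ℝ → ℝ≥0∞) :
    ∫⁻ x in Ioi 0, F (x ^ κ⁻¹) = ∫⁻ u in Ioi 0, ENNReal.ofReal (κ * u ^ (κ - 1)) * F u := by
  have image : (fun u : ℝ ↦ u ^ κ) '' Ioi 0 = Ioi 0 := by
    refine Subset.antisymm (image_subset_iff.2 fun u hu ↦ rpow_pos_of_pos hu κ) fun x hx ↦ ?_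
    exact ⟨x ^ κ⁻¹, rpow_pos_of_pos hx _, rpow_inv_rpow (le_of_lt hx) hκ.ne'⟩
  have monotone : MonotoneOn (fun u : ℝ ↦ u ^ κ) (Ioi 0) := fun u hu v _ huv ↦
    rpow_le_rpow (le_of_lt hu) huv hκ.le
  rw [← image, lintegral_image_eq_lintegral_deriv_mul_of_monotoneOn measurableSet_Ioi
    (fun u hu ↦ (hasDerivAt_rpow_const (Or.inl (ne_of_gt hu))).hasDerivWithinAt) monotone, image]
  exact setLIntegral_congr_fun measurableSet_Ioi fun u hu ↦ by
    simp only [rpow_rpow_inv (le_of_lt hu) hκ.ne']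

theorem map_abs_rpow_inv_volume (hκ : 0 < κ) :
    volume.map (fun x : ℝ ↦ |x| ^ κ⁻¹) =
      volume.withDensity ((Ioi 0).indicator fun u ↦ ENNReal.ofReal (2 * κ * u ^ (κ - 1))) := by
  refine Measure.ext_of_lintegral _ fun F hF ↦ ?_
  have hw : Measurable fun u : ℝ ↦ ENNReal.ofReal (2 * κ * u ^ (κ - 1)) := by fun_prop
  rw [lintegral_map hF (by fun_prop), lintegral_comp_abs fun x ↦ F (x ^ κ⁻¹),
    lintegral_Ioi_comp_rpow_inv hκ, withDensity_indicator measurableSet_Ioi,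
    lintegral_withDensity_eq_lintegral_mul _ hw hF, ← lintegral_const_mul _ (by fun_prop)]
  refine lintegral_congr fun u ↦ ?_
  rw [Pi.mul_apply, mul_assoc 2 κ, ENNReal.ofReal_mul zero_le_two, ENNReal.ofReal_ofNat, mul_assoc]

theorem sigmaFinite_map_abs_rpow_inv_volume (hκ : 0 < κ) :
    SigmaFinite (volume.map fun x : ℝ ↦ |x| ^ κ⁻¹) := by
  rw [map_abs_rpow_inv_volume hκ]
  refine SigmaFinite.withDensity_of_ne_top (.of_forall fun u ↦ ?_)
  by_cases hu : u ∈ Ioi (0 : ℝ) <;> simp [hu]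

theorem isLogConcaveMeasure_map_abs_rpow_inv_volume (hκ : 1 ≤ κ) :
    IsLogConcaveMeasure (volume.map fun x : ℝ ↦ |x| ^ κ⁻¹) := by
  have hκ₀ : 0 < κ := zero_lt_one.trans_le hκ
  have density_eq : EqOn (fun u ↦ ENNReal.ofReal (2 * κ * u ^ (κ - 1)))
      (fun u ↦ ENNReal.ofReal (exp (-((κ - 1) * -log u + -log (2 * κ))))) (Ioi 0) := by
    intro u hu
    have hu : 0 < u := hu
    simp only
    rw [← exp_log (show 0 < 2 * κ * u ^ (κ - 1) by positivity),
      log_mul (by positivity) (by positivity), log_rpow hu]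
    congr 2
    ring
  rw [map_abs_rpow_inv_volume hκ₀, indicator_congr density_eq]
  exact isLogConcaveMeasure_volume_real.withDensity_indicator_exp_neg isOpen_Ioi <|
    ((strictConcaveOn_log_Ioi.concaveOn.neg).smul (sub_nonneg.2 hκ)).add_const _

end AbsRpow

section Tail

theorem lintegral_rpow_le_of_measure_Ici_le_exp {ν : Measure ℝ} (hν₀ : ∀ᵐ y ∂ν, 0 ≤ y) {C t : ℝ}
    (hC : 0 ≤ C) (ht : 0 < t) (hν : ∀ u, ν (Ici u) ≤ ENNReal.ofReal (C * exp (-(u / t)))) {p : ℝ}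
    (hp : 0 < p) :
    ∫⁻ y, ENNReal.ofReal (y ^ p) ∂ν ≤ ENNReal.ofReal (C * Gamma (p + 1) * t ^ p) := by
  have integrableOn : IntegrableOn (fun u ↦ C * (u ^ (p - 1) * exp (-(t⁻¹ * u)))) (Ioi 0) := by
    simpa only [IntegrableOn, rpow_one, neg_mul] using (integrableOn_rpow_mul_exp_neg_mul_rpow
      (show -1 < p - 1 by linarith) one_pos (inv_pos.2 ht)).const_mul C
  have nonneg : ∀ᵐ u ∂volume.restrict (Ioi 0), 0 ≤ C * (u ^ (p - 1) * exp (-(t⁻¹ * u))) := by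
    filter_upwards [ae_restrict_mem measurableSet_Ioi] with u hu
    have : 0 < u := hu
    positivity
  calc ∫⁻ y, ENNReal.ofReal (y ^ p) ∂ν
      = ENNReal.ofReal p * ∫⁻ u in Ioi 0, ν (Ici u) * ENNReal.ofReal (u ^ (p - 1)) :=
        lintegral_rpow_eq_lintegral_meas_le_mul ν hν₀ aemeasurable_id hp
    _ ≤ ENNReal.ofReal p * ∫⁻ u in Ioi 0,
          ENNReal.ofReal (C * (u ^ (p - 1) * exp (-(t⁻¹ * u)))) := by
        gcongr ENNReal.ofReal p * ?_
        refine lintegral_mono fun u ↦ ?_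
        calc ν (Ici u) * ENNReal.ofReal (u ^ (p - 1))
            ≤ ENNReal.ofReal (C * exp (-(u / t))) * ENNReal.ofReal (u ^ (p - 1)) := by
              gcongr; exact hν u
          _ = ENNReal.ofReal (C * (u ^ (p - 1) * exp (-(t⁻¹ * u)))) := by
              rw [← ENNReal.ofReal_mul (by positivity), div_eq_inv_mul]
              ring_nf
    _ = ENNReal.ofReal (C * Gamma (p + 1) * t ^ p) := by
        rw [← ofReal_integral_eq_lintegral_ofReal integrableOn nonneg, ← ENNReal.ofReal_mul hp.le,
          integral_const_mul, Real.integral_rpow_mul_exp_neg_mul_Ioi hp (inv_pos.2 ht),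
          Gamma_add_one hp.ne', one_div, inv_inv]
        ring_nf

theorem exists_measure_Ici_le (ν : Measure ℝ) [IsFiniteMeasure ν] {ε : ℝ≥0∞} (hε : 0 < ε) :
    ∃ t, 0 < t ∧ ν (Ici t) ≤ ε := by
  have tendsto_zero : Tendsto (fun n : ℕ ↦ ν (Ici (n : ℝ))) atTop (𝓝 0) := by
    have iInter_eq_empty : ⋂ n : ℕ, Ici (n : ℝ) = ∅ :=
      eq_empty_of_forall_notMem fun x hx ↦
        let ⟨n, hn⟩ := exists_nat_gt x
        hn.not_ge (mem_iInter.1 hx n)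
    rw [← measure_empty (μ := ν), ← iInter_eq_empty]
    exact tendsto_measure_iInter_atTop (fun n ↦ measurableSet_Ici.nullMeasurableSet)
      (fun m n hmn ↦ Ici_subset_Ici.2 (Nat.cast_le.2 hmn)) ⟨0, measure_ne_top _ _⟩
  obtain ⟨n, hn, hn₀⟩ := ((tendsto_zero.eventually_lt_const hε).and (eventually_gt_atTop 0)).exists
  exact ⟨n, Nat.cast_pos.2 hn₀, hn.le⟩

variable {ν : Measure ℝ} [IsProbabilityMeasure ν]

namespace IsLogConcaveMeasure

theorem measure_Ici_mul_le_rpow (hν : IsLogConcaveMeasure ν) (hν₀ : ∀ᵐ y ∂ν, 0 ≤ y) {s : ℝ}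
    (hs : 1 ≤ s) (t : ℝ) : ν (Ici (s * t)) ≤ ν (Ici t) ^ s := by
  rcases hs.eq_or_lt with rfl | hs₁
  · simp
  have hs₀ : 0 < s := zero_lt_one.trans hs₁
  have hs_inv : 0 < 1 - s⁻¹ := sub_pos.2 (inv_lt_one_of_one_lt₀ hs₁)
  have interpolation := hν.measure_rpow_mul_measure_rpow_le (inv_pos.2 hs₀) hs_inv
    (add_sub_cancel _ _) (measurableSet_Ici (a := s * t)) (measurableSet_Ici (a := 0))
    (measurableSet_Ici (a := t)) fun x hx y hy ↦ ?_
  · rwa [mem_ae_iff_prob_eq_one measurableSet_Ici |>.1 hν₀, ENNReal.one_rpow, mul_one,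
      ENNReal.rpow_inv_le_iff hs₀] at interpolation
  · calc t = s⁻¹ * (s * t) := (inv_mul_cancel_left₀ hs₀.ne' t).symm
      _ ≤ s⁻¹ * x := by gcongr; exact hx
      _ ≤ s⁻¹ * x + (1 - s⁻¹) * y := le_add_of_nonneg_right (mul_nonneg hs_inv.le hy)

theorem measure_Ici_le_exp (hν : IsLogConcaveMeasure ν) (hν₀ : ∀ᵐ y ∂ν, 0 ≤ y) {t : ℝ}
    (ht : 0 < t) (hνt : ν (Ici t) ≤ ENNReal.ofReal (exp (-1))) (u : ℝ) :
    ν (Ici u) ≤ ENNReal.ofReal (exp 1 * exp (-(u / t))) := by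
  rw [← exp_add, ← sub_eq_add_neg]
  rcases le_total u t with hut | htu
  · refine prob_le_one.trans (ENNReal.one_le_ofReal.2 (one_le_exp ?_))
    exact sub_nonneg.2 ((div_le_one ht).2 hut)
  · have hs : 1 ≤ u / t := (one_le_div ht).2 htu
    calc ν (Ici u) = ν (Ici (u / t * t)) := by rw [div_mul_cancel₀ _ ht.ne']
      _ ≤ ν (Ici t) ^ (u / t) := hν.measure_Ici_mul_le_rpow hν₀ hs t
      _ ≤ ENNReal.ofReal (exp (-1)) ^ (u / t) := by gcongr
      _ = ENNReal.ofReal (exp (-(u / t))) := by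
        rw [ENNReal.ofReal_rpow_of_pos (exp_pos _), ← exp_mul, neg_one_mul]
      _ ≤ ENNReal.ofReal (exp (1 - u / t)) := by gcongr; linarith

theorem integrable_rpow (hν : IsLogConcaveMeasure ν) (hν₀ : ∀ᵐ y ∂ν, 0 ≤ y) {p : ℝ} (hp : 0 < p) :
    Integrable (fun y ↦ y ^ p) ν := by
  obtain ⟨t, ht, hνt⟩ := exists_measure_Ici_le ν (ENNReal.ofReal_pos.2 (exp_pos (-1)))
  refine ⟨by fun_prop, ?_⟩
  rw [hasFiniteIntegral_iff_ofReal (hν₀.mono fun y hy ↦ rpow_nonneg hy p)]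
  exact (lintegral_rpow_le_of_measure_Ici_le_exp hν₀ (exp_pos 1).le ht
    (hν.measure_Ici_le_exp hν₀ ht hνt) hp).trans_lt ENNReal.ofReal_lt_top

theorem integral_rpow_le_mul_rpow (hν : IsLogConcaveMeasure ν) (hν₀ : ∀ᵐ y ∂ν, 0 ≤ y) {t : ℝ}
    (ht : 0 < t) (hνt : ν (Ici t) ≤ ENNReal.ofReal (exp (-1))) {p : ℝ} (hp : 0 < p) :
    ∫ y, y ^ p ∂ν ≤ exp 1 * Gamma (p + 1) * t ^ p := by
  rw [integral_eq_lintegral_of_nonneg_ae (hν₀.mono fun y hy ↦ rpow_nonneg hy p) (by fun_prop)]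
  exact ENNReal.toReal_le_of_le_ofReal (by positivity) <|
    lintegral_rpow_le_of_measure_Ici_le_exp hν₀ (exp_pos 1).le ht
      (hν.measure_Ici_le_exp hν₀ ht hνt) hp

theorem integral_rpow_le_mul_integral_rpow (hν : IsLogConcaveMeasure ν) (hν₀ : ∀ᵐ y ∂ν, 0 ≤ y)
    {p q : ℝ} (hp : 0 < p) (hq : 0 < q) :
    ∫ y, y ^ p ∂ν ≤ exp (1 + p / q) * Gamma (p + 1) * (∫ y, y ^ q ∂ν) ^ (p / q) := by
  have rpow_nonneg_ae : 0 ≤ᵐ[ν] fun y ↦ y ^ q := hν₀.mono fun y hy ↦ rpow_nonneg hy q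
  rcases (integral_nonneg_of_ae rpow_nonneg_ae).eq_or_lt with hm | hm
  · have eq_zero : ∀ᵐ y ∂ν, y = 0 := by
      filter_upwards [hν₀, (integral_eq_zero_iff_of_nonneg_ae rpow_nonneg_ae
        (hν.integrable_rpow hν₀ hq)).1 hm.symm] with y hy hyq
      exact (rpow_eq_zero hy hq.ne').1 hyq
    rw [← hm, zero_rpow (div_pos hp hq).ne', mul_zero]
    exact (integral_eq_zero_of_ae (eq_zero.mono fun y hy ↦ by simp [hy, hp.ne'])).le
  set m := ∫ y, y ^ q ∂ν
  set t := (exp 1 * m) ^ q⁻¹ with ht_def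
  have ht : 0 < t := by positivity
  have ht_rpow : t ^ q = exp 1 * m := rpow_inv_rpow (by positivity) hq.ne'
  have markov : t ^ q * ν.real {y | t ^ q ≤ y ^ q} ≤ m :=
    mul_meas_ge_le_integral_of_nonneg rpow_nonneg_ae (hν.integrable_rpow hν₀ hq) _
  have hνt : ν (Ici t) ≤ ENNReal.ofReal (exp (-1)) := by
    rw [← ofReal_measureReal]
    refine ENNReal.ofReal_le_ofReal ?_
    calc ν.real (Ici t) ≤ ν.real {y | t ^ q ≤ y ^ q} :=
          measureReal_mono fun y hy ↦ rpow_le_rpow ht.le hy hq.le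
      _ ≤ m / t ^ q := (le_div_iff₀' (by positivity)).2 markov
      _ = exp (-1) := by rw [ht_rpow, exp_neg]; field_simp
  calc ∫ y, y ^ p ∂ν ≤ exp 1 * Gamma (p + 1) * t ^ p :=
        hν.integral_rpow_le_mul_rpow hν₀ ht hνt hp
    _ = exp (1 + p / q) * Gamma (p + 1) * m ^ (p / q) := by
        rw [ht_def, ← rpow_mul (by positivity), mul_rpow (exp_pos 1).le hm.le, exp_one_rpow,
          exp_add, div_eq_inv_mul]
        ring

end IsLogConcaveMeasure

end Tail

section Unconditional

theorem map_withDensity_comp {E F : Type*} [MeasurableSpace E] [MeasurableSpace F] {μ : Measure E}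
    {T : E → F} (hT : Measurable T) {w : F → ℝ≥0∞} (hw : Measurable w) :
    (μ.withDensity (w ∘ T)).map T = (μ.map T).withDensity w := by
  ext s hs
  rw [Measure.map_apply hT hs, withDensity_apply _ (hT hs), withDensity_apply _ hs,
    setLIntegral_map hs hw hT]
  rfl

/-- Unconditionality: invariance under all changes of signs of the coordinates. -/
def IsUnconditional {ι α : Type*} (φ : (ι → ℝ) → α) : Prop :=
  ∀ ε : ι → ℝ, (∀ i, ε i = 1 ∨ ε i = -1) → ∀ x, φ (fun i ↦ ε i * x i) = φ x

theorem IsUnconditional.comp_abs {ι α : Type*} {φ : (ι → ℝ) → α} (hφ : IsUnconditional φ)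
    (x : ι → ℝ) : φ (fun i ↦ |x i|) = φ x := by
  rw [← hφ (fun i ↦ if x i < 0 then -1 else 1) (fun i ↦ by grind) x]
  congr! 2 with i
  grind

variable {ι : Type*} [Fintype ι]

theorem isLogConcaveMeasure_map_abs_rpow_inv {κ : ℝ} (hκ : 1 ≤ κ) {φ : (ι → ℝ) → ℝ}
    (hφ : IsUnconditional φ)
    (hconv : ConvexOn ℝ (univ.pi fun _ ↦ Ioi 0) fun x : ι → ℝ ↦ φ fun i ↦ x i ^ κ) :
    IsLogConcaveMeasure (((volume : Measure (ι → ℝ)).withDensity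
      fun x ↦ ENNReal.ofReal (exp (-φ x))).map fun x i ↦ |x i| ^ κ⁻¹) := by
  set w : (ι → ℝ) → ℝ≥0∞ := (univ.pi fun _ ↦ Ioi 0).indicator
    fun x ↦ ENNReal.ofReal (exp (-φ fun i ↦ x i ^ κ))
  have hκ₀ : 0 < κ := zero_lt_one.trans_le hκ
  have := sigmaFinite_map_abs_rpow_inv_volume hκ₀
  have isOpen_posOrthant : IsOpen (univ.pi fun _ : ι ↦ Ioi (0 : ℝ)) :=
    isOpen_set_pi finite_univ fun _ _ ↦ isOpen_Ioi
  have density_eq : (fun x ↦ ENNReal.ofReal (exp (-φ x))) =ᵐ[volume]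
      w ∘ fun x i ↦ |x i| ^ κ⁻¹ := by
    filter_upwards [ae_all_iff.2 fun i : ι ↦ Measure.ae_eval_ne _ i 0] with x hx
    have mem_posOrthant : (fun i ↦ |x i| ^ κ⁻¹) ∈ univ.pi fun _ ↦ Ioi 0 := fun i _ ↦
      rpow_pos_of_pos (abs_pos.2 (hx i)) _
    simp only [w, comp_apply]
    rw [indicator_of_mem mem_posOrthant]
    simp only [rpow_inv_rpow (abs_nonneg _) hκ₀.ne', hφ.comp_abs]
  rw [withDensity_congr_ae density_eq, map_withDensity_comp (by fun_prop)
    (measurable_indicator_exp_neg isOpen_posOrthant hconv), volume_pi,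
    Measure.pi_map_pi (f := fun _ x ↦ |x| ^ κ⁻¹) fun _ ↦ by fun_prop]
  exact (IsLogConcaveMeasure.pi fun _ ↦ isLogConcaveMeasure_map_abs_rpow_inv_volume hκ)
    |>.withDensity_indicator_exp_neg isOpen_posOrthant hconv

theorem moment_reverse_holder_general {κ : ℝ} (hκ : 1 ≤ κ) {p q : ℝ} (hp : 0 < p) (hq : 0 < q)
    {Ω : Type*} [MeasurableSpace Ω] {P : Measure Ω} [IsProbabilityMeasure P] {X : Ω → ι → ℝ}
    (hX : AEMeasurable X P) {φ : (ι → ℝ) → ℝ}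
    (hlaw : P.map X = volume.withDensity fun x ↦ ENNReal.ofReal (exp (-φ x)))
    (hφ : IsUnconditional φ)
    (hconv : ConvexOn ℝ (univ.pi fun _ ↦ Ioi 0) fun x : ι → ℝ ↦ φ fun i ↦ x i ^ κ) (i : ι) :
    ∫ ω, |X ω i| ^ p ∂P ≤
      exp (1 + p / q) * Gamma (κ * p + 1) * (∫ ω, |X ω i| ^ q ∂P) ^ (p / q) := by
  have hκ₀ : 0 < κ := zero_lt_one.trans_le hκ
  set U : Ω → ℝ := fun ω ↦ |X ω i| ^ κ⁻¹
  have hU : AEMeasurable U P := by fun_prop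
  have := Measure.isProbabilityMeasure_map hU
  have map_U : P.map U = ((P.map X).map fun x i ↦ |x i| ^ κ⁻¹).map fun u ↦ u i := by
    have measurable_abs_rpow : Measurable fun (x : ι → ℝ) i ↦ |x i| ^ κ⁻¹ := by fun_prop
    rw [Measure.map_map (measurable_pi_apply i) measurable_abs_rpow,
      AEMeasurable.map_map_of_aemeasurable
        ((measurable_pi_apply i).comp measurable_abs_rpow).aemeasurable hX]
    rfl
  have logConcave : IsLogConcaveMeasure (P.map U) := by
    rw [map_U, hlaw]
    exact (isLogConcaveMeasure_map_abs_rpow_inv hκ hφ hconv).map (LinearMap.proj i).isLinear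
      (measurable_pi_apply i)
  have nonneg : ∀ᵐ u ∂P.map U, 0 ≤ u := by
    rw [ae_map_iff hU measurableSet_Ici]
    exact .of_forall fun ω ↦ by positivity
  have moment (r : ℝ) : ∫ u, u ^ (κ * r) ∂P.map U = ∫ ω, |X ω i| ^ r ∂P := by
    rw [integral_map hU (by fun_prop)]
    simp only [U, rpow_mul (rpow_nonneg (abs_nonneg _) _), rpow_inv_rpow (abs_nonneg _) hκ₀.ne']
  have := logConcave.integral_rpow_le_mul_integral_rpow nonneg (mul_pos hκ₀ hp) (mul_pos hκ₀ hq)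
  rwa [moment, moment, mul_div_mul_left _ _ hκ₀.ne'] at this

end Unconditional

/-- Borell-type reverse Hölder inequality: for an unconditional density `e^{-φ}` with
`φ(x₁^κ, …, xₙ^κ)` convex on the positive orthant, `E|X_i|^p ≤ c_{p,κ} (E|X_i|²)^{p/2}`. -/
theorem moment_reverse_holder (κ : ℝ) (hκ : 1 ≤ κ) (p : ℝ) (hp : 1 ≤ p) :
    ∃ c : ℝ, 0 < c ∧
      ∀ (n : ℕ) (Ω : Type) [MeasureSpace Ω] [IsProbabilityMeasure (ℙ : Measure Ω)]
        (X : Ω → Fin n → ℝ) (φ : (Fin n → ℝ) → ℝ),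
        Measurable X →
        -- e^{-φ} is a probability density
        IsProbabilityMeasure ((volume : Measure (Fin n → ℝ)).withDensity
          (fun x => ENNReal.ofReal (Real.exp (-φ x)))) →
        -- X has density e^{-φ(x)}
        Measure.map X ℙ = (volume : Measure (Fin n → ℝ)).withDensity
          (fun x => ENNReal.ofReal (Real.exp (-φ x))) →
        -- the density is unconditional
        (∀ ε : Fin n → ℝ, (∀ i, ε i = 1 ∨ ε i = -1) →
          ∀ x, φ (fun i => ε i * x i) = φ x) →
        -- φ(x₁^κ, …, xₙ^κ) is convex on the positive orthant
        ConvexOn ℝ {x : Fin n → ℝ | ∀ i, 0 ≤ x i} (fun x => φ (fun i => x i ^ κ)) →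
        ∀ i : Fin n,
          ∫ ω, |X ω i| ^ p ∂ℙ ≤ c * (∫ ω, |X ω i| ^ (2:ℝ) ∂ℙ) ^ (p / 2) := by
  refine ⟨exp (1 + p / 2) * Gamma (κ * p + 1), by positivity, ?_⟩
  intro n Ω _ _ X φ hX _ hlaw hφ hconv i
  have convex_posOrthant : Convex ℝ (univ.pi fun _ : Fin n ↦ Ioi (0 : ℝ)) :=
    convex_pi fun _ _ ↦ convex_Ioi 0
  exact moment_reverse_holder_general hκ (by positivity) two_pos hX.aemeasurable hlaw hφ
    (hconv.subset (fun x hx i ↦ (hx i trivial).le) convex_posOrthant) i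
end

section
/- There exists a universal constant C > 0 (for instance C = 100 suffices) such that for every a ≥ C, the function f : ℝ₊ → ℝ₊ defined by f(x) = log a for 0 ≤ x ≤ a, f(x) = log x for a ≤ x ≤ 2a, and f(x) = √x − √(2a) + log(2a) for x ≥ 2a, is a (1/2)-convex function, i.e. f(t²x + (1−t)²y) ≤ t f(x) + (1−t) f(y) for all x,y ≥ 0 and t ∈ [0,1]. -/
open Real

/-- The piecewise function equal to `log a` on `[0,a]`, `log x` on `[a,2a]` and
`√x - √(2a) + log(2a)` on `[2a,∞)`. -/
noncomputable def piecewiseF (a x : ℝ) : ℝ :=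
  if x ≤ a then Real.log a
  else if x ≤ 2 * a then Real.log x
  else Real.sqrt x - Real.sqrt (2 * a) + Real.log (2 * a)

/-!
Write `f = piecewiseF a`, `g x = √x - √(2a) + log (2a)` and `z = t²x + s²y` with `t + s = 1`. Since
`f` is monotone and constant on `(-∞, a]`, we may replace `x, y` by `max x a, max y a`, and assume
`a ≤ x ≤ y`. As `√ - log` increases on `[4, ∞)`, both `log ≤ f` and `g ≤ f` hold on `[a, ∞)`.

* If `z ≤ x`, then `f z ≤ f x ≤ f y`.
* If `2a ≤ z`, then `f z = g z`, and `g` is `(1/2)`-convex because `√` is.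
* If `x < z < 2a`, then `f z = log z`. For `y ≤ 3x` the logarithm itself satisfies the inequality.
  For `3x < y` the bound `s²y ≤ 2a` makes `log z - log x ≤ s²y / x` at most `s (√y - √(2a))`.
-/

/-- `(1/2)`-convexity of `f`, tested at points of `S` and with the weights `t`, `1 - t` written as
a pair `t + s = 1`, as for `ConvexOn`. The set `S` need not contain the points `t²x + s²y`. -/
def HalfConvexOn (S : Set ℝ) (f : ℝ → ℝ) : Prop :=
  ∀ ⦃x⦄, x ∈ S → ∀ ⦃y⦄, y ∈ S → ∀ ⦃t s : ℝ⦄, 0 ≤ t → 0 ≤ s → t + s = 1 →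
    f (t ^ 2 * x + s ^ 2 * y) ≤ t * f x + s * f y

namespace HalfConvexOn

variable {S : Set ℝ} {f : ℝ → ℝ}

lemma add_const (hf : HalfConvexOn S f) (c : ℝ) : HalfConvexOn S (fun x ↦ f x + c) := by
  intro x hx y hy t s ht hs hts
  calc f (t ^ 2 * x + s ^ 2 * y) + c ≤ t * f x + s * f y + (t + s) * c := by
        rw [hts, one_mul]; gcongr; exact hf hx hy ht hs hts
    _ = t * (f x + c) + s * (f y + c) := by ring

lemma univ_of_monotone {a : ℝ} (hf : HalfConvexOn (Set.Ici a) f) (hmono : Monotone f)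
    (hconst : ∀ x, f (max x a) = f x) : HalfConvexOn Set.univ f := by
  intro x _ y _ t s ht hs hts
  calc f (t ^ 2 * x + s ^ 2 * y) ≤ f (t ^ 2 * max x a + s ^ 2 * max y a) := by
        apply hmono; gcongr <;> exact le_max_left _ _
    _ ≤ t * f (max x a) + s * f (max y a) :=
        hf (le_max_right x a) (le_max_right y a) ht hs hts
    _ = t * f x + s * f y := by rw [hconst, hconst]

end HalfConvexOn

lemma halfConvexOn_sqrt : HalfConvexOn (Set.Ici 0) Real.sqrt := by
  intro x hx y hy t s ht hs _
  apply Real.sqrt_le_left (by positivity) |>.2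
  calc t ^ 2 * x + s ^ 2 * y ≤ t ^ 2 * x + s ^ 2 * y + 2 * (t * √x) * (s * √y) :=
        le_add_of_nonneg_right (by positivity)
    _ = (t * √x + s * √y) ^ 2 := by
        rw [add_sq, mul_pow, mul_pow, Real.sq_sqrt hx, Real.sq_sqrt hy]; ring

lemma sq_mul_add_sq_mul_pos {x y t s : ℝ} (hx : 0 < x) (hy : 0 < y) (hts : t + s = 1) :
    0 < t ^ 2 * x + s ^ 2 * y := by
  rcases eq_or_ne t 0 with rfl | ht
  · obtain rfl : s = 1 := by linarith
    simpa using hy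
  · positivity

lemma halfConvexOn_log {b : ℝ} (hb : 0 < b) : HalfConvexOn (Set.Icc b (3 * b)) Real.log := by
  rintro x ⟨hbx, hxb⟩ y ⟨hby, hyb⟩ t s ht hs hts
  have hx : 0 < x := hb.trans_le hbx
  have hy : 0 < y := hb.trans_le hby
  have hmean : 0 < t * x⁻¹ + s * y⁻¹ :=
    convex_Ioi (0 : ℝ) (inv_pos.2 hx) (inv_pos.2 hy) ht hs hts
  have hz : 0 < t ^ 2 * x + s ^ 2 * y := sq_mul_add_sq_mul_pos hx hy hts
  have hsq : t * x ^ 2 + s * y ^ 2 ≤ 3 * (x * y) := by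
    calc t * x ^ 2 + s * y ^ 2 ≤ t * (3 * (x * y)) + s * (3 * (x * y)) := by
          gcongr <;> nlinarith
      _ = 3 * (x * y) := by rw [← add_mul, hts, one_mul]
  have hprod : (t ^ 2 * x + s ^ 2 * y) * (t * x⁻¹ + s * y⁻¹) ≤ 1 := by
    have hdefect : 1 - (t ^ 2 * x + s ^ 2 * y) * (t * x⁻¹ + s * y⁻¹) =
        t * s * (3 * (x * y) - (t * x ^ 2 + s * y ^ 2)) / (x * y) := by
      obtain rfl : s = 1 - t := by linarith
      field_simp
      ring
    rw [← sub_nonneg, hdefect]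
    have := sub_nonneg.2 hsq
    positivity
  have hlog_mean : t * Real.log x⁻¹ + s * Real.log y⁻¹ ≤ Real.log (t * x⁻¹ + s * y⁻¹) :=
    strictConcaveOn_log_Ioi.concaveOn.2 (inv_pos.2 hx) (inv_pos.2 hy) ht hs hts
  have hlog_prod := Real.log_nonpos (by positivity) hprod
  rw [Real.log_mul hz.ne' hmean.ne'] at hlog_prod
  rw [Real.log_inv, Real.log_inv] at hlog_mean
  linarith

lemma monotoneOn_sqrt_sub_log : MonotoneOn (fun x ↦ √x - Real.log x) (Set.Ici 4) := by
  intro x (hx : 4 ≤ x) y _ hxy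
  have hx0 : 0 < √x := by positivity
  have hy0 : 0 < √y := hx0.trans_le (Real.sqrt_le_sqrt hxy)
  have hx2 : 2 ≤ √x := Real.le_sqrt_of_sq_le (by linarith)
  have hlog : Real.log √y - Real.log √x ≤ (√y - √x) / √x := by
    rw [← Real.log_div hy0.ne' hx0.ne', sub_div, div_self hx0.ne']
    exact Real.log_le_sub_one_of_pos (by positivity)
  have hdiv : (√y - √x) / √x ≤ (√y - √x) / 2 := by
    gcongr
    exact sub_nonneg.2 (Real.sqrt_le_sqrt hxy)
  rw [Real.log_sqrt (by linarith), Real.log_sqrt (by linarith)] at hlog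
  dsimp only
  linarith

lemma log_le_of_three_mul_le {c x y t s : ℝ} (hc : 144 ≤ c) (hcx : c ≤ 2 * x) (hxc : x ≤ c)
    (hxy : 3 * x ≤ y) (ht : 0 ≤ t) (hs : 0 ≤ s) (hts : t + s = 1)
    (hzc : t ^ 2 * x + s ^ 2 * y ≤ c) :
    Real.log (t ^ 2 * x + s ^ 2 * y) ≤
      t * Real.log x + s * (√y - √c + Real.log c) := by
  have hx : 0 < x := by linarith
  have hy : 0 < y := by linarith
  have hz0 : 0 < t ^ 2 * x + s ^ 2 * y := sq_mul_add_sq_mul_pos hx hy hts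
  have hc12 : 12 ≤ √c := Real.le_sqrt_of_sq_le (by linarith)
  have hsy : s * √y ≤ √c := by
    apply Real.le_sqrt_of_sq_le
    rw [mul_pow, Real.sq_sqrt hy.le]
    nlinarith [mul_nonneg (sq_nonneg t) hx.le]
  have hcy : √c ≤ 5 / 6 * √y := by
    rw [Real.sqrt_le_left (by positivity), mul_pow, Real.sq_sqrt hy.le]
    linarith
  have hfrac : s ^ 2 * y / x ≤ s * (√y - √c) := by
    rw [div_le_iff₀ hx]
    calc s ^ 2 * y = s * √y * (s * √y) := by nlinarith [Real.sq_sqrt hy.le]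
      _ ≤ s * √y * √c := by gcongr
      _ ≤ s * √y * (x / 6) := by
          gcongr
          nlinarith [Real.sq_sqrt (show 0 ≤ c by linarith)]
      _ = s * (√y / 6) * x := by ring
      _ ≤ s * (√y - √c) * x := by gcongr; linarith
  have hlog : Real.log (t ^ 2 * x + s ^ 2 * y) - Real.log x ≤ s ^ 2 * y / x := by
    have ht1 : t ^ 2 ≤ 1 := pow_le_one₀ ht (by linarith)
    calc Real.log (t ^ 2 * x + s ^ 2 * y) - Real.log x
        = Real.log ((t ^ 2 * x + s ^ 2 * y) / x) := (Real.log_div hz0.ne' hx.ne').symm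
      _ ≤ (t ^ 2 * x + s ^ 2 * y) / x - 1 := Real.log_le_sub_one_of_pos (by positivity)
      _ = t ^ 2 + s ^ 2 * y / x - 1 := by field_simp
      _ ≤ s ^ 2 * y / x := by linarith
  calc Real.log (t ^ 2 * x + s ^ 2 * y) ≤ (t + s) * Real.log x + s * (√y - √c) := by
        rw [hts]; linarith
    _ = t * Real.log x + s * (√y - √c + Real.log x) := by ring
    _ ≤ t * Real.log x + s * (√y - √c + Real.log c) := by gcongr

section piecewiseF

variable {a x : ℝ}

lemma piecewiseF_of_mem_Icc (hax : a ≤ x) (hxa : x ≤ 2 * a) : piecewiseF a x = Real.log x := by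
  rcases hax.eq_or_lt with rfl | hax
  · exact if_pos le_rfl
  · rw [piecewiseF, if_neg hax.not_ge, if_pos hxa]

lemma piecewiseF_of_two_mul_le (ha : 0 < a) (hx : 2 * a ≤ x) :
    piecewiseF a x = √x - √(2 * a) + Real.log (2 * a) := by
  rcases hx.eq_or_lt with rfl | hx
  · rw [piecewiseF_of_mem_Icc (by linarith) le_rfl, sub_self, zero_add]
  · rw [piecewiseF, if_neg (by linarith), if_neg hx.not_ge]

lemma piecewiseF_max_left : piecewiseF a (max x a) = piecewiseF a x := by
  rcases le_total x a with hx | hx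
  · rw [max_eq_right hx, piecewiseF, piecewiseF, if_pos le_rfl, if_pos hx]
  · rw [max_eq_left hx]

lemma piecewiseF_eq_log_add_sqrt (ha : 0 < a) :
    piecewiseF a x = Real.log (max a (min x (2 * a))) + (√(max x (2 * a)) - √(2 * a)) := by
  rcases le_total x (2 * a) with hx | hx
  · rw [← piecewiseF_max_left, piecewiseF_of_mem_Icc (le_max_right x a) (max_le hx (by linarith)),
      min_eq_left hx, max_eq_right hx, max_comm, sub_self, add_zero]
  · rw [piecewiseF_of_two_mul_le ha hx, min_eq_right hx, max_eq_left hx,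
      max_eq_right (by linarith), add_comm]

lemma monotone_piecewiseF (ha : 0 < a) : Monotone (piecewiseF a) := by
  intro x y hxy
  rw [piecewiseF_eq_log_add_sqrt ha, piecewiseF_eq_log_add_sqrt ha]
  gcongr

lemma log_le_piecewiseF (ha : 2 ≤ a) (hx : a ≤ x) : Real.log x ≤ piecewiseF a x := by
  rcases le_total x (2 * a) with hxa | hxa
  · rw [piecewiseF_of_mem_Icc hx hxa]
  · rw [piecewiseF_of_two_mul_le (by linarith) hxa]
    have : √(2 * a) - Real.log (2 * a) ≤ √x - Real.log x :=
      monotoneOn_sqrt_sub_log (Set.mem_Ici.2 (by linarith)) (Set.mem_Ici.2 (by linarith)) hxa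
    linarith

lemma sqrt_sub_sqrt_add_log_le_piecewiseF (ha : 4 ≤ a) (hx : a ≤ x) :
    √x - √(2 * a) + Real.log (2 * a) ≤ piecewiseF a x := by
  rcases le_total x (2 * a) with hxa | hxa
  · rw [piecewiseF_of_mem_Icc hx hxa]
    have : √x - Real.log x ≤ √(2 * a) - Real.log (2 * a) :=
      monotoneOn_sqrt_sub_log (Set.mem_Ici.2 (by linarith)) (Set.mem_Ici.2 (by linarith)) hxa
    linarith
  · rw [piecewiseF_of_two_mul_le (by linarith) hxa]

lemma piecewiseF_le_of_two_mul_le {y t s : ℝ} (ha : 4 ≤ a) (hx : a ≤ x) (hy : a ≤ y)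
    (ht : 0 ≤ t) (hs : 0 ≤ s) (hts : t + s = 1) (hz : 2 * a ≤ t ^ 2 * x + s ^ 2 * y) :
    piecewiseF a (t ^ 2 * x + s ^ 2 * y) ≤ t * piecewiseF a x + s * piecewiseF a y := by
  let g (u : ℝ) : ℝ := √u + (Real.log (2 * a) - √(2 * a))
  have hg {u : ℝ} (hu : a ≤ u) : g u ≤ piecewiseF a u := by
    linarith [sqrt_sub_sqrt_add_log_le_piecewiseF ha hu]
  calc piecewiseF a (t ^ 2 * x + s ^ 2 * y) = g (t ^ 2 * x + s ^ 2 * y) := by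
        rw [piecewiseF_of_two_mul_le (by linarith) hz]; ring
    _ ≤ t * g x + s * g y :=
        halfConvexOn_sqrt.add_const _ (Set.mem_Ici.2 (by linarith)) (Set.mem_Ici.2 (by linarith))
          ht hs hts
    _ ≤ t * piecewiseF a x + s * piecewiseF a y := by gcongr <;> exact hg ‹_›

lemma log_le_piecewiseF_add_piecewiseF {y t s : ℝ} (ha : 72 ≤ a) (hx : a ≤ x) (hxa : x ≤ 2 * a)
    (hxy : x ≤ y) (ht : 0 ≤ t) (hs : 0 ≤ s) (hts : t + s = 1)
    (hza : t ^ 2 * x + s ^ 2 * y ≤ 2 * a) :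
    Real.log (t ^ 2 * x + s ^ 2 * y) ≤ t * piecewiseF a x + s * piecewiseF a y := by
  have hlog {u : ℝ} (hu : a ≤ u) : Real.log u ≤ piecewiseF a u := log_le_piecewiseF (by linarith) hu
  rcases le_total y (3 * x) with hyx | hyx
  · calc Real.log (t ^ 2 * x + s ^ 2 * y) ≤ t * Real.log x + s * Real.log y :=
          halfConvexOn_log (by linarith) ⟨le_rfl, by linarith⟩ ⟨hxy, hyx⟩ ht hs hts
      _ ≤ t * piecewiseF a x + s * piecewiseF a y := by
          gcongr
          exacts [hlog hx, hlog (hx.trans hxy)]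
  · calc Real.log (t ^ 2 * x + s ^ 2 * y)
        ≤ t * Real.log x + s * (√y - √(2 * a) + Real.log (2 * a)) :=
          log_le_of_three_mul_le (by linarith) (by linarith) hxa hyx ht hs hts hza
      _ ≤ t * piecewiseF a x + s * piecewiseF a y := by
          gcongr
          exacts [hlog hx, sqrt_sub_sqrt_add_log_le_piecewiseF (by linarith) (hx.trans hxy)]

lemma halfConvexOn_Ici_piecewiseF (ha : 72 ≤ a) : HalfConvexOn (Set.Ici a) (piecewiseF a) := by
  intro x (hx : a ≤ x) y (hy : a ≤ y) t s ht hs hts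
  wlog hxy : x ≤ y generalizing x y t s
  · rw [add_comm (t ^ 2 * x), add_comm (t * _)]
    exact this hy hx hs ht (by rwa [add_comm]) (le_of_not_ge hxy)
  have hmono : Monotone (piecewiseF a) := monotone_piecewiseF (by linarith)
  rcases le_or_gt (t ^ 2 * x + s ^ 2 * y) x with hzx | hxz
  · calc piecewiseF a (t ^ 2 * x + s ^ 2 * y) ≤ piecewiseF a x := hmono hzx
      _ = t * piecewiseF a x + s * piecewiseF a x := by rw [← add_mul, hts, one_mul]
      _ ≤ t * piecewiseF a x + s * piecewiseF a y := by gcongr; exact hmono hxy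
  rcases le_total (2 * a) (t ^ 2 * x + s ^ 2 * y) with hz | hz
  · exact piecewiseF_le_of_two_mul_le (by linarith) hx hy ht hs hts hz
  · rw [piecewiseF_of_mem_Icc (by linarith) hz]
    exact log_le_piecewiseF_add_piecewiseF ha hx (by linarith) hxy ht hs hts hz

theorem piecewiseF_half_convex_general (ha : 72 ≤ a) : HalfConvexOn Set.univ (piecewiseF a) :=
  (halfConvexOn_Ici_piecewiseF ha).univ_of_monotone (monotone_piecewiseF (by linarith))
    fun _ ↦ piecewiseF_max_left

end piecewiseF

/-- There is a universal constant `C > 0` such that for every `a ≥ C` the piecewise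
function above is `(1/2)`-convex on `ℝ₊`. -/
theorem piecewiseF_half_convex :
    ∃ C : ℝ, 0 < C ∧
      ∀ a : ℝ, C ≤ a →
        ∀ x y : ℝ, 0 ≤ x → 0 ≤ y → ∀ t : ℝ, 0 ≤ t → t ≤ 1 →
          piecewiseF a (t ^ 2 * x + (1 - t) ^ 2 * y) ≤
            t * piecewiseF a x + (1 - t) * piecewiseF a y :=
  ⟨72, by norm_num, fun _ ha x y _ _ t ht ht1 ↦ piecewiseF_half_convex_general ha
    (Set.mem_univ x) (Set.mem_univ y) ht (sub_nonneg.2 ht1) (add_sub_cancel t 1)⟩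
end

section
/- For all t ∈ [0,1] and all c ∈ [1,4], the inequality (1−t)² + t²c − c^t ≤ 0 holds. Consequently, for any 0 < a ≤ b ≤ 4a and any x,y ∈ [a,b] and t ∈ [0,1], log((1−t)²x + t²y) ≤ (1−t)log x + t log y. -/
open Real

/-!
Write `c = exp u`. After division by `c ^ t` the inequality says that
`(1 - t)² exp (-t u) + t² exp ((1 - t) u) ≤ 1`. The left-hand side is convex in `u`, so on
`[-2, 2]` it is enough to treat `u = ±2`, and these two cases are exchanged by `t ↦ 1 - t`. For
`u = 2` the left-hand side takes the value `1` at `t = 0` and at `t = 1`, and its derivative in `t`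
factors, which shows that it decreases and then increases in between. The range `|u| ≤ 2` is
optimal, by the slopes in `t` at `0` and `1`, and it contains `[0, log 4]`. The statement about the
logarithm is the case `c = y / x`.
-/

lemma four_le_exp_two : 4 ≤ exp 2 := by
  calc (4 : ℝ) = 2 * 2 := by norm_num
    _ ≤ exp 1 * exp 1 := by gcongr <;> exact exp_one_gt_two.le
    _ = exp 2 := by rw [← exp_add, one_add_one_eq_two]

lemma two_div_exp_two_add_one_lt_one : 2 / (exp 2 + 1) < 1 := by
  rw [div_lt_one (by positivity)]
  linarith [four_le_exp_two]

/-- The quotient of `(1 - t)² + t² c` by `c ^ t`, as a function of `t` and `u = log c`. -/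
noncomputable def halfConvexRatio (t u : ℝ) : ℝ :=
  (1 - t) ^ 2 * exp (-(t * u)) + t ^ 2 * exp ((1 - t) * u)

namespace halfConvexRatio

lemma one_sub_neg (t u : ℝ) : halfConvexRatio (1 - t) (-u) = halfConvexRatio t u := by
  simp [halfConvexRatio, add_comm]

lemma mul_exp (t u : ℝ) :
    halfConvexRatio t u * exp (t * u) = (1 - t) ^ 2 + t ^ 2 * exp u := by
  have hleft : exp (-(t * u)) * exp (t * u) = 1 := by
    rw [← exp_add, neg_add_cancel, exp_zero]
  have hright : exp ((1 - t) * u) * exp (t * u) = exp u := by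
    rw [← exp_add, ← add_mul, sub_add_cancel, one_mul]
  rw [halfConvexRatio, add_mul, mul_assoc, mul_assoc, hleft, hright, mul_one]

lemma convexOn (t : ℝ) : ConvexOn ℝ Set.univ (halfConvexRatio t) := by
  have convexOn_exp_mul (k : ℝ) : ConvexOn ℝ Set.univ fun u ↦ exp (k * u) :=
    convexOn_exp.comp_linearMap (LinearMap.mulLeft ℝ k)
  exact (((convexOn_exp_mul (-t)).smul (sq_nonneg (1 - t))).add
    ((convexOn_exp_mul (1 - t)).smul (sq_nonneg t))).congr
      fun u _ ↦ by simp [halfConvexRatio]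

lemma hasDerivAt_left_two (t : ℝ) :
    HasDerivAt (halfConvexRatio · 2)
      (2 * exp (-(t * 2)) * ((1 - t) * (t * (exp 2 + 1) - 2))) t := by
  have hid : HasDerivAt (fun s : ℝ ↦ s) 1 t := hasDerivAt_id t
  have hsub : HasDerivAt (fun s : ℝ ↦ 1 - s) (-1) t := hid.const_sub 1
  have hexp : exp ((1 - t) * 2) = exp 2 * exp (-(t * 2)) := by
    rw [← exp_add, sub_mul, one_mul, sub_eq_add_neg]
  refine (((hsub.pow 2).mul (hid.mul_const 2).fun_neg.exp).add
    ((hid.pow 2).mul (hsub.mul_const 2).exp)).congr_deriv ?_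
  simp only [Pi.pow_apply, hexp]
  ring

lemma continuous_left_two : Continuous (halfConvexRatio · 2) :=
  continuous_iff_continuousAt.2 fun t ↦ (hasDerivAt_left_two t).continuousAt

lemma antitoneOn_left_two_Icc :
    AntitoneOn (halfConvexRatio · 2) (Set.Icc 0 (2 / (exp 2 + 1))) := by
  refine antitoneOn_of_hasDerivWithinAt_nonpos (convex_Icc _ _) continuous_left_two.continuousOn
    (fun t _ ↦ (hasDerivAt_left_two t).hasDerivWithinAt) fun t ht ↦ ?_
  rw [interior_Icc] at ht
  have hfactor : t * (exp 2 + 1) - 2 ≤ 0 :=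
    sub_nonpos.2 ((le_div_iff₀ (by positivity)).1 ht.2.le)
  have ht_one : 0 ≤ 1 - t := by linarith [ht.2, two_div_exp_two_add_one_lt_one]
  exact mul_nonpos_of_nonneg_of_nonpos (by positivity)
    (mul_nonpos_of_nonneg_of_nonpos ht_one hfactor)

lemma monotoneOn_left_two_Icc :
    MonotoneOn (halfConvexRatio · 2) (Set.Icc (2 / (exp 2 + 1)) 1) := by
  refine monotoneOn_of_hasDerivWithinAt_nonneg (convex_Icc _ _) continuous_left_two.continuousOn
    (fun t _ ↦ (hasDerivAt_left_two t).hasDerivWithinAt) fun t ht ↦ ?_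
  rw [interior_Icc] at ht
  have hfactor : 0 ≤ t * (exp 2 + 1) - 2 :=
    sub_nonneg.2 ((div_le_iff₀ (by positivity)).1 ht.1.le)
  exact mul_nonneg (by positivity) (mul_nonneg (sub_nonneg.2 ht.2.le) hfactor)

lemma antitoneOn_left_two_Ici : AntitoneOn (halfConvexRatio · 2) (Set.Ici 1) := by
  refine antitoneOn_of_hasDerivWithinAt_nonpos (convex_Ici 1) continuous_left_two.continuousOn
    (fun t _ ↦ (hasDerivAt_left_two t).hasDerivWithinAt) fun t ht ↦ ?_
  rw [interior_Ici, Set.mem_Ioi] at ht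
  have hfactor : 0 ≤ t * (exp 2 + 1) - 2 :=
    sub_nonneg.2 ((div_le_iff₀ (by positivity)).1 (two_div_exp_two_add_one_lt_one.trans ht).le)
  exact mul_nonpos_of_nonneg_of_nonpos (by positivity)
    (mul_nonpos_of_nonpos_of_nonneg (sub_nonpos.2 ht.le) hfactor)

lemma left_two_le_one {t : ℝ} (ht : 0 ≤ t) : halfConvexRatio t 2 ≤ 1 := by
  have hzero : halfConvexRatio 0 2 = 1 := by simp [halfConvexRatio]
  have hone : halfConvexRatio 1 2 = 1 := by simp [halfConvexRatio]
  have hcrit_nonneg : 0 ≤ 2 / (exp 2 + 1) := by positivity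
  have hcrit_le_one := two_div_exp_two_add_one_lt_one.le
  rcases le_total t (2 / (exp 2 + 1)) with ht_crit | hcrit_t
  · exact (antitoneOn_left_two_Icc ⟨le_rfl, hcrit_nonneg⟩ ⟨ht, ht_crit⟩ ht).trans_eq hzero
  rcases le_total t 1 with ht_one | hone_t
  · exact (monotoneOn_left_two_Icc ⟨hcrit_t, ht_one⟩ ⟨hcrit_le_one, le_rfl⟩ ht_one).trans_eq hone
  · exact (antitoneOn_left_two_Ici Set.self_mem_Ici hone_t hone_t).trans_eq hone

lemma le_one {t u : ℝ} (ht : t ∈ Set.Icc (0 : ℝ) 1) (hu : u ∈ Set.Icc (-2 : ℝ) 2) :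
    halfConvexRatio t u ≤ 1 := by
  have hneg : halfConvexRatio t (-2) ≤ 1 := by
    rw [← one_sub_neg, neg_neg]
    exact left_two_le_one (sub_nonneg.2 ht.2)
  exact ((convexOn t).le_max_of_mem_Icc (Set.mem_univ _) (Set.mem_univ _) hu).trans
    (max_le hneg (left_two_le_one ht.1))

end halfConvexRatio

lemma sq_one_sub_add_sq_mul_le_rpow {t c : ℝ} (ht : t ∈ Set.Icc (0 : ℝ) 1)
    (hc : c ∈ Set.Icc (exp (-2)) (exp 2)) : (1 - t) ^ 2 + t ^ 2 * c ≤ c ^ t := by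
  have hc_pos : 0 < c := (exp_pos _).trans_le hc.1
  have hlog : log c ∈ Set.Icc (-2 : ℝ) 2 :=
    ⟨(le_log_iff_exp_le hc_pos).2 hc.1, (log_le_iff_le_exp hc_pos).2 hc.2⟩
  calc (1 - t) ^ 2 + t ^ 2 * c
      = halfConvexRatio t (log c) * exp (t * log c) := by
        rw [halfConvexRatio.mul_exp, exp_log hc_pos]
    _ ≤ exp (t * log c) :=
        mul_le_of_le_one_left (exp_pos _).le (halfConvexRatio.le_one ht hlog)
    _ = c ^ t := by rw [rpow_def_of_pos hc_pos, mul_comm]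

lemma sq_one_sub_mul_add_sq_mul_le_rpow_mul_rpow {t x y : ℝ} (ht : t ∈ Set.Icc (0 : ℝ) 1)
    (hx : 0 < x) (hxy : x ≤ exp 2 * y) (hyx : y ≤ exp 2 * x) :
    (1 - t) ^ 2 * x + t ^ 2 * y ≤ x ^ (1 - t) * y ^ t := by
  have hy : 0 < y := pos_of_mul_pos_right (hx.trans_le hxy) (exp_pos 2).le
  have hratio : y / x ∈ Set.Icc (exp (-2)) (exp 2) := by
    refine ⟨?_, (div_le_iff₀ hx).2 hyx⟩
    rwa [exp_neg, le_div_iff₀ hx, inv_mul_le_iff₀ (exp_pos 2)]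
  calc (1 - t) ^ 2 * x + t ^ 2 * y
      = x * ((1 - t) ^ 2 + t ^ 2 * (y / x)) := by field_simp
    _ ≤ x * (y / x) ^ t := by gcongr; exact sq_one_sub_add_sq_mul_le_rpow ht hratio
    _ = x ^ (1 - t) * y ^ t := by
        rw [div_rpow hy.le hx.le, rpow_sub hx, rpow_one]
        ring

lemma log_sq_one_sub_mul_add_sq_mul_le {t x y : ℝ} (ht : t ∈ Set.Icc (0 : ℝ) 1)
    (hx : 0 < x) (hxy : x ≤ exp 2 * y) (hyx : y ≤ exp 2 * x) :
    log ((1 - t) ^ 2 * x + t ^ 2 * y) ≤ (1 - t) * log x + t * log y := by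
  have hy : 0 < y := pos_of_mul_pos_right (hx.trans_le hxy) (exp_pos 2).le
  have hpos : 0 < (1 - t) ^ 2 * x + t ^ 2 * y := by
    rcases ht.1.eq_or_lt with rfl | ht_pos
    · simpa using hx
    · positivity
  calc log ((1 - t) ^ 2 * x + t ^ 2 * y)
      ≤ log (x ^ (1 - t) * y ^ t) :=
        log_le_log hpos (sq_one_sub_mul_add_sq_mul_le_rpow_mul_rpow ht hx hxy hyx)
    _ = (1 - t) * log x + t * log y := by
        rw [log_mul (rpow_pos_of_pos hx _).ne' (rpow_pos_of_pos hy _).ne', log_rpow hx,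
          log_rpow hy]

theorem pow_ineq_and_log_half_convex_general :
    (∀ t : ℝ, t ∈ Set.Icc (0 : ℝ) 1 → ∀ c : ℝ, c ∈ Set.Icc (exp (-2)) (exp 2) →
      (1 - t) ^ 2 + t ^ 2 * c - c ^ t ≤ 0) ∧
    (∀ a b : ℝ, 0 < a → b ≤ exp 2 * a →
      ∀ x ∈ Set.Icc a b, ∀ y ∈ Set.Icc a b, ∀ t ∈ Set.Icc (0 : ℝ) 1,
        log ((1 - t) ^ 2 * x + t ^ 2 * y) ≤ (1 - t) * log x + t * log y) := by
  refine ⟨fun t ht c hc ↦ sub_nonpos.2 (sq_one_sub_add_sq_mul_le_rpow ht hc), ?_⟩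
  intro a b ha hb x hx y hy t ht
  have le_exp_two_mul {z w : ℝ} (hz : z ∈ Set.Icc a b) (hw : w ∈ Set.Icc a b) :
      z ≤ exp 2 * w :=
    (hz.2.trans hb).trans (by gcongr; exact hw.1)
  exact log_sq_one_sub_mul_add_sq_mul_le ht (ha.trans_le hx.1) (le_exp_two_mul hx hy)
    (le_exp_two_mul hy hx)

/-- `(1-t)² + t²c - c^t ≤ 0` for `t ∈ [0,1]`, `c ∈ [1,4]`; consequently the logarithm is
`(1/2)`-convex on any interval `[a,b] ⊆ [a,4a]`. -/
theorem pow_ineq_and_log_half_convex :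
    (∀ t : ℝ, t ∈ Set.Icc (0:ℝ) 1 → ∀ c : ℝ, c ∈ Set.Icc (1:ℝ) 4 →
      (1 - t) ^ 2 + t ^ 2 * c - c ^ t ≤ 0) ∧
    (∀ a b : ℝ, 0 < a → a ≤ b → b ≤ 4 * a →
      ∀ x ∈ Set.Icc a b, ∀ y ∈ Set.Icc a b, ∀ t ∈ Set.Icc (0:ℝ) 1,
        Real.log ((1 - t) ^ 2 * x + t ^ 2 * y) ≤
          (1 - t) * Real.log x + t * Real.log y) := by
  have hIcc : Set.Icc (1 : ℝ) 4 ⊆ Set.Icc (exp (-2)) (exp 2) :=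
    Set.Icc_subset_Icc (exp_le_one_iff.2 (by norm_num)) four_le_exp_two
  exact ⟨fun t ht c hc ↦ pow_ineq_and_log_half_convex_general.1 t ht c (hIcc hc),
    fun a b ha _ hb ↦ pow_ineq_and_log_half_convex_general.2 a b ha
      (hb.trans (mul_le_mul_of_nonneg_right four_le_exp_two ha.le))⟩
end

section
/- For each n, let a = √((3/7)n) and let f : ℝ₊ → ℝ₊ be defined by f(x) = log a for 0 ≤ x ≤ a, f(x) = log x for a ≤ x ≤ 2a, and f(x) = √x − √(2a) + log(2a) for x ≥ 2a. Let μ be the probability measure on ℝⁿ with density C_n e^{-(n-1)f(|x|)} (C_n the normalizing constant). Then ∫ x_i x_j dμ(x) = (1+ε_n)δ_{ij} for all i,j = 1,...,n, where |ε_n| ≤ C/n for a universal constant C > 0. Equivalently, ∫ x dμ(x) = 0 and (1/n)∫|x|² dμ(x) = 1 + O(1/n). -/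
open MeasureTheory Real

/-- The radial profile: `log a` on `[0,a]`, `log x` on `[a,2a]`,
`√x - √(2a) + log(2a)` on `[2a,∞)`. -/
noncomputable def radialF (a x : ℝ) : ℝ :=
  if x ≤ a then Real.log a
  else if x ≤ 2 * a then Real.log x
  else Real.sqrt x - Real.sqrt (2 * a) + Real.log (2 * a)

/-!
A rotation-invariant probability measure is isotropic as soon as the average of `|x|²` is `n`, and
in polar coordinates that average is a ratio of two integrals `∫ yᵏ w(y)ᵐ dy` over `(0, ∞)`, for
`k = 2` and `k = 0`, where `m = n - 1` and `w(y) = y e^{-f(y)}`. The profile is chosen so that `w`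
equals `1` on `[a, 2a]`, while `w(y) = y / a` before this shell and `w(y) ≤ 2a / y` after it, once
`a` is large. As `m` grows the integrals therefore concentrate on the shell, up to a relative error
`O(1 / m)`, so the average of `|x|²` is `∫ₐ²ᵃ y² dy / ∫ₐ²ᵃ dy = 7a² / 3 = n` up to a factor
`1 + O(1 / n)`.
-/

open Set Filter ProbabilityTheory Asymptotics Module

theorem measurePreserving_withDensity_comp {α β : Type*} [MeasurableSpace α] [MeasurableSpace β]
    {μ : Measure α} {ν : Measure β} {e : α ≃ᵐ β} (he : MeasurePreserving e μ ν)
    (f : β → ENNReal) :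
    MeasurePreserving e (μ.withDensity (f ∘ e)) (ν.withDensity f) where
  measurable := e.measurable
  map_eq := by
    ext s hs
    rw [Measure.map_apply e.measurable hs, withDensity_apply _ (e.measurable hs),
      withDensity_apply _ hs]
    exact he.setLIntegral_comp_preimage_emb e.measurableEmbedding f s

section OrthogonalInvariance

variable {E : Type*} [NormedAddCommGroup E] [InnerProductSpace ℝ E] [MeasurableSpace E]
  [BorelSpace E]

/-- Invariance of a measure under the full orthogonal group, encoded as the group of linear
isometric automorphisms; this is the only feature of a radial measure that isotropy needs. -/
def IsOrthogonallyInvariant (μ : Measure E) : Prop :=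
  ∀ e : E ≃ₗᵢ[ℝ] E, MeasurePreserving e μ μ

theorem isOrthogonallyInvariant_withDensity_norm [FiniteDimensional ℝ E] (ρ : ℝ → ENNReal) :
    IsOrthogonallyInvariant ((volume : Measure E).withDensity fun x ↦ ρ ‖x‖) := by
  intro e
  simpa [Function.comp_def] using measurePreserving_withDensity_comp
    (e := e.toHomeomorph.toMeasurableEquiv) e.measurePreserving fun x ↦ ρ ‖x‖

namespace IsOrthogonallyInvariant

variable {μ : Measure E}

theorem identDistrib_inner (hμ : IsOrthogonallyInvariant μ) {u v : E} (huv : ‖u‖ = ‖v‖) :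
    IdentDistrib (inner ℝ u) (inner ℝ v) μ μ where
  aemeasurable_fst := by fun_prop
  aemeasurable_snd := by fun_prop
  map_eq := by
    let e := (ℝ ∙ (u - v))ᗮ.reflection
    have he : inner ℝ v ∘ e = inner ℝ u := by
      funext x
      rw [Function.comp_apply, ← Submodule.reflection_sub huv]
      exact e.inner_map_map u x
    rw [← he, ← Measure.map_map (by fun_prop) (by fun_prop), (hμ e).map_eq]

theorem integral_inner_eq_zero (hμ : IsOrthogonallyInvariant μ) (u : E) :
    ∫ x, inner ℝ u x ∂μ = 0 := by
  have h := (hμ.identDistrib_inner (norm_neg u)).integral_eq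
  simp only [inner_neg_left, integral_neg] at h
  linarith

theorem integral_inner_mul_inner_eq_zero (hμ : IsOrthogonallyInvariant μ) {u v : E}
    (huv : inner ℝ u v = 0) : ∫ x, inner ℝ u x * inner ℝ v x ∂μ = 0 := by
  let e := (ℝ ∙ u)ᗮ.reflection
  have hu (x : E) : inner ℝ u (e x) = -inner ℝ u x := by
    rw [← e.inner_map_map u x, Submodule.reflection_orthogonalComplement_singleton_eq_neg,
      inner_neg_left, neg_neg]
  have hv (x : E) : inner ℝ v (e x) = inner ℝ v x := by
    rw [← e.inner_map_map v x, Submodule.reflection_mem_subspace_eq_self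
      (Submodule.mem_orthogonal_singleton_iff_inner_right.mpr huv)]
  have h := (hμ e).integral_comp e.toHomeomorph.measurableEmbedding
    fun x ↦ inner ℝ u x * inner ℝ v x
  simp only [hu, hv, neg_mul, integral_neg] at h
  linarith

theorem integral_inner_sq {ι : Type*} [Fintype ι] (hμ : IsOrthogonallyInvariant μ)
    (b : OrthonormalBasis ι ℝ E) (i : ι) :
    ∫ x, inner ℝ (b i) x ^ 2 ∂μ = (∫ x, ‖x‖ ^ 2 ∂μ) / Fintype.card ι := by
  have hident (j : ι) : IdentDistrib (fun x ↦ inner ℝ (b i) x ^ 2)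
      (fun x ↦ inner ℝ (b j) x ^ 2) μ μ :=
    (hμ.identDistrib_inner (by simp)).comp (measurable_id.pow_const 2)
  by_cases hint : Integrable (fun x ↦ inner ℝ (b i) x ^ 2) μ
  · have : Nonempty ι := ⟨i⟩
    simp_rw [← b.sum_sq_inner_right]
    rw [integral_finsetSum _ fun j _ ↦ (hident j).integrable_iff.mp hint,
      Finset.sum_congr rfl fun j _ ↦ (hident j).integral_eq.symm]
    simp
  · -- Neither integrand is integrable, so both integrals take the default value `0`.
    have hnorm : ¬ Integrable (fun x : E ↦ ‖x‖ ^ 2) μ := fun h ↦ hint <| by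
      refine h.mono' (by fun_prop) (ae_of_all _ fun x ↦ ?_)
      rw [norm_pow]
      gcongr
      simpa using norm_inner_le_norm (𝕜 := ℝ) (b i) x
    rw [integral_undef hint, integral_undef hnorm, zero_div]

theorem integral_inner_mul_inner {ι : Type*} [Fintype ι] [DecidableEq ι]
    (hμ : IsOrthogonallyInvariant μ) (b : OrthonormalBasis ι ℝ E) (i j : ι) :
    ∫ x, inner ℝ (b i) x * inner ℝ (b j) x ∂μ =
      (∫ x, ‖x‖ ^ 2 ∂μ) / Fintype.card ι * if i = j then 1 else 0 := by
  split_ifs with hij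
  · subst hij
    simpa only [sq, mul_one] using hμ.integral_inner_sq b i
  · rw [mul_zero, hμ.integral_inner_mul_inner_eq_zero (b.orthonormal.2 hij)]

end IsOrthogonallyInvariant

end OrthogonalInvariance

theorem integral_norm_of_isProbabilityMeasure_withDensity {E : Type*} [NormedAddCommGroup E]
    [NormedSpace ℝ E] [FiniteDimensional ℝ E] [Nontrivial E] [MeasurableSpace E] [BorelSpace E]
    (μ : Measure E) [μ.IsAddHaarMeasure] {ρ : ℝ → ℝ} (hρ : Measurable ρ) (hρ₀ : 0 ≤ ρ) (c : ℝ)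
    [IsProbabilityMeasure (μ.withDensity fun x ↦ ENNReal.ofReal (c * ρ ‖x‖))] (h : ℝ → ℝ) :
    ∫ x, h ‖x‖ ∂(μ.withDensity fun x ↦ ENNReal.ofReal (c * ρ ‖x‖)) =
      (∫ y in Ioi 0, y ^ (finrank ℝ E - 1) * (ρ y * h y)) /
        ∫ y in Ioi 0, y ^ (finrank ℝ E - 1) * ρ y := by
  obtain ⟨K, hK⟩ : ∃ K : ℝ, ∀ g : ℝ → ℝ,
      ∫ x, g ‖x‖ ∂(μ.withDensity fun x ↦ ENNReal.ofReal (c * ρ ‖x‖)) =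
        K * ∫ y in Ioi 0, y ^ (finrank ℝ E - 1) * (ρ y * g y) := by
    refine ⟨max c 0 * (finrank ℝ E * μ.real (Metric.ball 0 1)), fun g ↦ ?_⟩
    have hdensity (x : E) : (ENNReal.ofReal (c * ρ ‖x‖)).toReal • g ‖x‖ =
        max c 0 * (ρ ‖x‖ * g ‖x‖) := by
      rw [ENNReal.ofReal_mul' (hρ₀ _), ENNReal.toReal_mul, ENNReal.toReal_ofReal',
        ENNReal.toReal_ofReal (hρ₀ _), smul_eq_mul, mul_assoc]
    rw [integral_withDensity_eq_integral_toReal_smul (by fun_prop)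
      (ae_of_all _ fun _ ↦ ENNReal.ofReal_lt_top)]
    simp_rw [hdensity]
    rw [integral_const_mul, integral_fun_norm_addHaar μ fun y ↦ ρ y * g y]
    simp [mul_assoc]
  have hmass : 1 = K * ∫ y in Ioi 0, y ^ (finrank ℝ E - 1) * ρ y := by simpa using hK 1
  have hne : ∫ y in Ioi 0, y ^ (finrank ℝ E - 1) * ρ y ≠ 0 := fun h₀ ↦ by simp [h₀] at hmass
  rw [hK, eq_div_iff hne, mul_right_comm, ← hmass, one_mul]

theorem integral_Ioc_div_pow_mul_pow {a : ℝ} (ha : 0 < a) (m k : ℕ) :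
    ∫ y in Ioc 0 a, (y / a) ^ m * y ^ k = a ^ (k + 1) / (m + k + 1) := by
  have hrw (y : ℝ) : (y / a) ^ m * y ^ k = (a ^ m)⁻¹ * y ^ (m + k) := by
    rw [div_pow, pow_add]; ring
  simp_rw [hrw]
  rw [← intervalIntegral.integral_of_le ha.le, intervalIntegral.integral_const_mul, integral_pow]
  push_cast
  rw [zero_pow (by omega), sub_zero, add_assoc m k 1, pow_add a m]
  field_simp

theorem div_pow_mul_pow_eq_rpow {c y : ℝ} (hy : 0 < y) (m k : ℕ) :
    (c / y) ^ m * y ^ k = c ^ m * y ^ ((k : ℝ) - m) := by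
  rw [rpow_sub hy, rpow_natCast, rpow_natCast]
  ring

theorem integrableOn_Ioi_div_pow_mul_pow {c : ℝ} (hc : 0 < c) {m k : ℕ} (hkm : k + 1 < m) :
    IntegrableOn (fun y ↦ (c / y) ^ m * y ^ k) (Ioi c) := by
  have hlt : (k : ℝ) - m < -1 := by
    have : (k : ℝ) + 1 < m := by exact_mod_cast hkm
    linarith
  exact IntegrableOn.congr_fun ((integrableOn_Ioi_rpow_of_lt hlt hc).const_mul (c ^ m))
    (fun y hy ↦ (div_pow_mul_pow_eq_rpow (hc.trans hy) m k).symm) measurableSet_Ioi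

theorem integral_Ioi_div_pow_mul_pow {c : ℝ} (hc : 0 < c) {m k : ℕ} (hkm : k + 1 < m) :
    ∫ y in Ioi c, (c / y) ^ m * y ^ k = c ^ (k + 1) / (m - k - 1) := by
  have hkm' : (k : ℝ) + 1 < m := by exact_mod_cast hkm
  have hpow : c ^ m * c ^ ((k : ℝ) - m + 1) = c ^ (k + 1) := by
    rw [← rpow_natCast, ← rpow_natCast, ← rpow_add hc]
    push_cast
    ring_nf
  rw [setIntegral_congr_fun measurableSet_Ioi
      fun y hy ↦ div_pow_mul_pow_eq_rpow (hc.trans hy) m k,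
    integral_const_mul, integral_Ioi_rpow_of_lt (by linarith) hc, ← hpow,
    show (m : ℝ) - k - 1 = -((k : ℝ) - m + 1) by ring, div_neg]
  ring

theorem log_sub_log_le_sqrt_sub_sqrt {c y : ℝ} (hc : 16 ≤ c) (hcy : c ≤ y) :
    2 * (log y - log c) ≤ √y - √c := by
  have hc₀ : 0 < c := by linarith
  have hy₀ : 0 < y := hc₀.trans_le hcy
  have hsqrt : 4 ≤ √c := le_sqrt_of_sq_le (by linarith)
  calc 2 * (log y - log c) = 4 * log (√y / √c) := by
        rw [log_div (by positivity) (by positivity), log_sqrt hy₀.le, log_sqrt hc₀.le]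
        ring
    _ ≤ √c * log (√y / √c) := by
        gcongr
        exact log_nonneg ((one_le_div (by positivity)).mpr (sqrt_le_sqrt hcy))
    _ ≤ √c * (√y / √c - 1) := by
        gcongr
        exact log_le_sub_one_of_pos (by positivity)
    _ = √y - √c := by field_simp

theorem measurable_radialF (a : ℝ) : Measurable (radialF a) :=
  .ite measurableSet_Iic measurable_const <|
    .ite measurableSet_Iic measurable_log (by fun_prop)

/-- The factor `w(y) = y e^{-f(y)}` of the radial density in polar coordinates, whose Jacobian
`yⁿ⁻¹` combines with `e^{-(n-1)f(y)}` to `w(y)ⁿ⁻¹`. -/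
noncomputable def shellWeight (a y : ℝ) : ℝ := y * exp (-radialF a y)

section ShellWeight

variable {a y : ℝ}

theorem shellWeight_pow (a y : ℝ) (m : ℕ) :
    shellWeight a y ^ m = y ^ m * exp (-m * radialF a y) := by
  rw [shellWeight, mul_pow, ← exp_nat_mul, mul_neg, neg_mul]

theorem measurable_shellWeight (a : ℝ) : Measurable (shellWeight a) :=
  measurable_id.mul (measurable_radialF a).neg.exp

theorem shellWeight_nonneg (hy : 0 ≤ y) : 0 ≤ shellWeight a y := by
  unfold shellWeight
  positivity

theorem shellWeight_of_le (ha : 0 < a) (hy : y ≤ a) : shellWeight a y = y / a := by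
  rw [shellWeight, radialF, if_pos hy, exp_neg, exp_log ha, div_eq_mul_inv]

theorem shellWeight_of_mem_Ioc (ha : 0 < a) (hy : y ∈ Ioc a (2 * a)) : shellWeight a y = 1 := by
  have hy₀ : 0 < y := ha.trans hy.1
  rw [shellWeight, radialF, if_neg hy.1.not_ge, if_pos hy.2, exp_neg, exp_log hy₀,
    mul_inv_cancel₀ hy₀.ne']

theorem shellWeight_le (ha : 8 ≤ a) (hy : 2 * a < y) : shellWeight a y ≤ 2 * a / y := by
  have hy₀ : 0 < y := by linarith
  have hF : 2 * log y - log (2 * a) ≤ radialF a y := by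
    rw [radialF, if_neg (by linarith), if_neg hy.not_ge]
    linarith [log_sub_log_le_sqrt_sub_sqrt (by linarith : 16 ≤ 2 * a) hy.le]
  calc y * exp (-radialF a y) ≤ y * exp (log (2 * a) - 2 * log y) := by gcongr; linarith
    _ = 2 * a / y := by
      rw [exp_sub, exp_log (by linarith), two_mul (log y), exp_add, exp_log hy₀]
      field_simp

end ShellWeight

/-- The `k`-th moment `∫ yᵏ w(y)ᵐ dy` over `(0, ∞)`, which is proportional to the integral of
`|x|ᵏ e^{-m f(|x|)}` over `ℝᵐ⁺¹`. -/
noncomputable def shellMoment (a : ℝ) (m k : ℕ) : ℝ :=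
  ∫ y in Ioi 0, shellWeight a y ^ m * y ^ k

section ShellMoment

variable {a : ℝ} {m k : ℕ}

theorem eqOn_shellWeight_Ioc_zero (ha : 0 < a) (m k : ℕ) :
    EqOn (fun y ↦ shellWeight a y ^ m * y ^ k) (fun y ↦ (y / a) ^ m * y ^ k) (Ioc 0 a) :=
  fun y hy ↦ by simp only [shellWeight_of_le ha hy.2]

theorem eqOn_shellWeight_Ioc (ha : 0 < a) (m k : ℕ) :
    EqOn (fun y ↦ shellWeight a y ^ m * y ^ k) (fun y ↦ y ^ k) (Ioc a (2 * a)) :=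
  fun y hy ↦ by simp only [shellWeight_of_mem_Ioc ha hy, one_pow, one_mul]

theorem shellWeight_pow_mul_pow_le (ha : 8 ≤ a) (m k : ℕ) {y : ℝ} (hy : y ∈ Ioi (2 * a)) :
    shellWeight a y ^ m * y ^ k ≤ (2 * a / y) ^ m * y ^ k := by
  have hy₀ : 0 ≤ y := by linarith [mem_Ioi.mp hy]
  have := shellWeight_nonneg (a := a) hy₀
  gcongr
  exact shellWeight_le ha hy

theorem integrableOn_shellWeight_Ioi (ha : 8 ≤ a) (hkm : k + 1 < m) :
    IntegrableOn (fun y ↦ shellWeight a y ^ m * y ^ k) (Ioi (2 * a)) := by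
  have := measurable_shellWeight a
  refine (integrableOn_Ioi_div_pow_mul_pow (by linarith) hkm).mono' (by fun_prop)
    (ae_restrict_of_forall_mem measurableSet_Ioi fun y hy ↦ ?_)
  have hy₀ : 0 ≤ y := by linarith [mem_Ioi.mp hy]
  rw [norm_of_nonneg (mul_nonneg (pow_nonneg (shellWeight_nonneg hy₀) m) (pow_nonneg hy₀ k))]
  exact shellWeight_pow_mul_pow_le ha m k hy

theorem shellMoment_eq (ha : 8 ≤ a) (hkm : k + 1 < m) :
    shellMoment a m k = a ^ (k + 1) / (m + k + 1) +
      (((2 * a) ^ (k + 1) - a ^ (k + 1)) / (k + 1) +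
        ∫ y in Ioi (2 * a), shellWeight a y ^ m * y ^ k) := by
  have ha₀ : 0 < a := by linarith
  have hinner := eqOn_shellWeight_Ioc_zero ha₀ m k
  have hshell := eqOn_shellWeight_Ioc ha₀ m k
  have hint_inner : IntegrableOn (fun y ↦ shellWeight a y ^ m * y ^ k) (Ioc 0 a) :=
    (integrableOn_congr_fun hinner measurableSet_Ioc).mpr
      (Continuous.integrableOn_Ioc (by fun_prop))
  have hint_shell : IntegrableOn (fun y ↦ shellWeight a y ^ m * y ^ k) (Ioc a (2 * a)) :=
    (integrableOn_congr_fun hshell measurableSet_Ioc).mpr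
      (Continuous.integrableOn_Ioc (by fun_prop))
  have hint_tail := integrableOn_shellWeight_Ioi ha hkm
  have hunion : Ioc a (2 * a) ∪ Ioi (2 * a) = Ioi a := Ioc_union_Ioi_eq_Ioi (by linarith)
  rw [shellMoment, ← Ioc_union_Ioi_eq_Ioi ha₀.le, setIntegral_union Ioc_disjoint_Ioi_same
      measurableSet_Ioi hint_inner (hunion ▸ hint_shell.union hint_tail),
    ← hunion, setIntegral_union Ioc_disjoint_Ioi_same measurableSet_Ioi hint_shell hint_tail,
    setIntegral_congr_fun measurableSet_Ioc hinner, integral_Ioc_div_pow_mul_pow ha₀,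
    setIntegral_congr_fun measurableSet_Ioc hshell,
    ← intervalIntegral.integral_of_le (by linarith), integral_pow]

theorem exists_shellMoment_eq (ha : 8 ≤ a) (hkm : k + 1 < m) :
    ∃ r ∈ Icc (0 : ℝ) (1 / (m + k + 1) + 2 ^ (k + 1) / (m - k - 1)),
      shellMoment a m k = a ^ (k + 1) * ((2 ^ (k + 1) - 1) / (k + 1) + r) := by
  have : 0 < a := by linarith
  set T := ∫ y in Ioi (2 * a), shellWeight a y ^ m * y ^ k with hT
  have hT₀ : 0 ≤ T := setIntegral_nonneg measurableSet_Ioi fun y hy ↦ by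
    have hy₀ : 0 ≤ y := by linarith [mem_Ioi.mp hy]
    exact mul_nonneg (pow_nonneg (shellWeight_nonneg hy₀) m) (pow_nonneg hy₀ k)
  have hT_le : T ≤ (2 * a) ^ (k + 1) / (m - k - 1) :=
    (setIntegral_mono_on (integrableOn_shellWeight_Ioi ha hkm)
      (integrableOn_Ioi_div_pow_mul_pow (by linarith) hkm) measurableSet_Ioi
      fun y hy ↦ shellWeight_pow_mul_pow_le ha m k hy).trans_eq
      (integral_Ioi_div_pow_mul_pow (by linarith) hkm)
  refine ⟨1 / (m + k + 1) + T / a ^ (k + 1), ⟨by positivity, ?_⟩, ?_⟩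
  · rw [add_le_add_iff_left, div_le_iff₀ (by positivity)]
    exact hT_le.trans_eq (by rw [mul_pow]; ring)
  · rw [shellMoment_eq ha hkm, ← hT, mul_pow]
    field_simp
    ring

end ShellMoment

/-- The number `ε_n` with `∫ |x|² dμ = n (1 + ε_n)`, expressed by the radial moments. -/
noncomputable def isotropyDefect (n : ℕ) : ℝ :=
  shellMoment √(3 / 7 * n) (n - 1) 2 / shellMoment √(3 / 7 * n) (n - 1) 0 / n - 1

theorem isotropyDefect_isBigO : isotropyDefect =O[atTop] fun n : ℕ ↦ (n : ℝ)⁻¹ := by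
  refine .of_bound 8 ((eventually_ge_atTop 150).mono fun n hn ↦ ?_)
  have hn' : (150 : ℝ) ≤ n := by exact_mod_cast hn
  set a := √(3 / 7 * n)
  have ha₂ : a ^ 2 = 3 / 7 * n := sq_sqrt (by positivity)
  have ha : 8 ≤ a := le_sqrt_of_sq_le (by linarith)
  have : 0 < a := by linarith
  obtain ⟨r₀, ⟨hr₀, hr₀_le⟩, h₀⟩ := exists_shellMoment_eq ha (by omega : 0 + 1 < n - 1)
  obtain ⟨r₂, ⟨hr₂, hr₂_le⟩, h₂⟩ := exists_shellMoment_eq ha (by omega : 2 + 1 < n - 1)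
  push_cast [Nat.cast_pred (by omega : 0 < n)] at hr₀_le hr₂_le h₀ h₂
  have hdefect : isotropyDefect n = (3 / 7 * r₂ - r₀) / (1 + r₀) := by
    rw [isotropyDefect, h₀, h₂]
    have hn₇ : (n : ℝ) = 7 / 3 * a ^ 2 := by linarith
    rw [hn₇]
    field_simp
    ring
  have hr₀_inv : r₀ ≤ 8 * (n : ℝ)⁻¹ :=
    calc r₀ ≤ 1 / (n - 1 + 0 + 1) + 2 ^ (0 + 1) / (n - 1 - 0 - 1) := hr₀_le
      _ ≤ 1 / n + 2 ^ (0 + 1) / (n / 2) := by gcongr <;> linarith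
      _ = 5 * (n : ℝ)⁻¹ := by field_simp; norm_num
      _ ≤ 8 * (n : ℝ)⁻¹ := by gcongr; norm_num
  have hr₂_inv : 3 / 7 * r₂ ≤ 8 * (n : ℝ)⁻¹ :=
    calc 3 / 7 * r₂ ≤ 3 / 7 * (1 / (n - 1 + 2 + 1) + 2 ^ (2 + 1) / (n - 1 - 2 - 1)) := by gcongr
      _ ≤ 3 / 7 * (1 / n + 2 ^ (2 + 1) / (n / 2)) := by gcongr <;> linarith
      _ = 51 / 7 * (n : ℝ)⁻¹ := by field_simp; norm_num
      _ ≤ 8 * (n : ℝ)⁻¹ := by gcongr; norm_num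
  calc ‖isotropyDefect n‖ = |3 / 7 * r₂ - r₀| / (1 + r₀) := by
        rw [hdefect, norm_eq_abs, abs_div, abs_of_pos (by linarith : 0 < 1 + r₀)]
    _ ≤ |3 / 7 * r₂ - r₀| := div_le_self (abs_nonneg _) (by linarith)
    _ ≤ 8 * (n : ℝ)⁻¹ := abs_sub_le_of_nonneg_of_le (by positivity) hr₂_inv hr₀ hr₀_inv
    _ = 8 * ‖(n : ℝ)⁻¹‖ := by rw [norm_of_nonneg (by positivity)]

section PiMeasure

variable {ι : Type*} [Fintype ι]

theorem measurePreserving_toLp_withDensity (ρ : ℝ → ENNReal) :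
    MeasurePreserving (MeasurableEquiv.toLp 2 (ι → ℝ))
      (volume.withDensity fun x ↦ ρ √(∑ i, x i ^ 2))
      (volume.withDensity fun x : EuclideanSpace ℝ ι ↦ ρ ‖x‖) := by
  simpa [Function.comp_def, EuclideanSpace.norm_eq] using measurePreserving_withDensity_comp
    (e := MeasurableEquiv.toLp 2 (ι → ℝ)) (PiLp.volume_preserving_toLp ι)
    fun x : EuclideanSpace ℝ ι ↦ ρ ‖x‖

variable (ρ : ℝ → ENNReal)

theorem integral_apply_withDensity (i : ι) :
    ∫ x : ι → ℝ, x i ∂(volume.withDensity fun x ↦ ρ √(∑ i, x i ^ 2)) = 0 := by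
  rw [← (isOrthogonallyInvariant_withDensity_norm ρ).integral_inner_eq_zero
      (EuclideanSpace.basisFun ι ℝ i), ← (measurePreserving_toLp_withDensity ρ).integral_comp']
  simp_rw [EuclideanSpace.basisFun_inner, MeasurableEquiv.toLp_apply]

theorem integral_apply_mul_apply_withDensity [DecidableEq ι] (i j : ι) :
    ∫ x : ι → ℝ, x i * x j ∂(volume.withDensity fun x ↦ ρ √(∑ i, x i ^ 2)) =
      (∫ x, ‖x‖ ^ 2 ∂(volume.withDensity fun x : EuclideanSpace ℝ ι ↦ ρ ‖x‖)) /
        Fintype.card ι * if i = j then 1 else 0 := by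
  rw [← (isOrthogonallyInvariant_withDensity_norm ρ).integral_inner_mul_inner
      (EuclideanSpace.basisFun ι ℝ),
    ← (measurePreserving_toLp_withDensity ρ).integral_comp']
  simp_rw [EuclideanSpace.basisFun_inner, MeasurableEquiv.toLp_apply]

end PiMeasure

theorem integral_norm_sq_div_eq_one_add_isotropyDefect {n : ℕ} (hn : 1 ≤ n) (c : ℝ)
    [IsProbabilityMeasure ((volume : Measure (EuclideanSpace ℝ (Fin n))).withDensity
      fun x ↦ ENNReal.ofReal (c * exp (-((n : ℝ) - 1) * radialF √(3 / 7 * n) ‖x‖)))] :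
    (∫ x, ‖x‖ ^ 2 ∂((volume : Measure (EuclideanSpace ℝ (Fin n))).withDensity
      fun x ↦ ENNReal.ofReal (c * exp (-((n : ℝ) - 1) * radialF √(3 / 7 * n) ‖x‖)))) / n =
      1 + isotropyDefect n := by
  have : Nonempty (Fin n) := ⟨⟨0, hn⟩⟩
  have := measurable_radialF √(3 / 7 * n)
  rw [integral_norm_of_isProbabilityMeasure_withDensity volume
    (ρ := fun y ↦ exp (-((n : ℝ) - 1) * radialF √(3 / 7 * n) y)) (by fun_prop)
    (fun y ↦ (exp_pos _).le) c (fun y ↦ y ^ 2), finrank_euclideanSpace_fin, isotropyDefect,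
    add_sub_cancel]
  simp_rw [shellMoment, shellWeight_pow, Nat.cast_pred hn, pow_zero, mul_one, mul_assoc]

/-- The probability measure on `ℝⁿ` with density `C_n e^{-(n-1) f(|x|)}`, with
`a = √((3/7)n)`, is essentially isotropic:
`∫ xᵢxⱼ dμ = (1+εₙ)δ_{ij}` with `|εₙ| ≤ C/n`. -/
theorem essentially_isotropic_radial :
    ∃ C : ℝ, 0 < C ∧
      ∀ n : ℕ, 1 ≤ n →
        ∀ (Cn : ℝ) (μ : Measure (Fin n → ℝ)),
          μ = (volume : Measure (Fin n → ℝ)).withDensity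
            (fun x => ENNReal.ofReal (Cn * Real.exp (-((n : ℝ) - 1) *
              radialF (Real.sqrt (3 / 7 * n)) (Real.sqrt (∑ i, (x i) ^ 2))))) →
          IsProbabilityMeasure μ →
          (∀ i, ∫ x, x i ∂μ = 0) ∧
            ∃ ε : ℝ, |ε| ≤ C / n ∧
              ∀ i j, ∫ x, x i * x j ∂μ = (1 + ε) * (if i = j then 1 else 0) := by
  obtain ⟨C, hC, hbound⟩ := bound_of_isBigO_nat_atTop isotropyDefect_isBigO
  refine ⟨C, hC, fun n hn c μ hμ _ ↦ ?_⟩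
  let ρ (y : ℝ) : ENNReal :=
    ENNReal.ofReal (c * exp (-((n : ℝ) - 1) * radialF √(3 / 7 * n) y))
  replace hμ : μ = volume.withDensity fun x ↦ ρ √(∑ i, x i ^ 2) := hμ
  subst hμ
  refine ⟨integral_apply_withDensity ρ, isotropyDefect n, ?_, fun i j ↦ ?_⟩
  · simpa [div_eq_mul_inv] using hbound (inv_ne_zero (Nat.cast_ne_zero.mpr (by omega : n ≠ 0)))
  · have : IsProbabilityMeasure (volume.withDensity
        fun x : EuclideanSpace ℝ (Fin n) ↦ ρ ‖x‖) :=
      (measurePreserving_toLp_withDensity (ι := Fin n) ρ).map_eq ▸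
        Measure.isProbabilityMeasure_map (MeasurableEquiv.measurable _).aemeasurable
    rw [integral_apply_mul_apply_withDensity, Fintype.card_fin,
      integral_norm_sq_div_eq_one_add_isotropyDefect hn c]
end
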